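/- The number of equivalence classes of generic degree n complex meromorphic functions on the Riemann sphere with a fixed generic set of 2n-2 critical values (the genus 0 Hurwitz number) equals n^{n-3}·(2n-2)!/n!. -/

import Mathlib

open scoped BigOperators

/-!
Hurwitz's theorem is proved for an arbitrary product `σ`, following Hurwitz's own recursion.
Multiplying by the inverse of the first transposition `(a b)` of a factorization joins two cycles of
`σ` or cuts one cycle into two. In a factorization of minimal length, relative to the orbits of the
group generated by its factors, a join leaves these orbits unchanged while a cut splits one of them.
So minimal factorizations satisfy a cut-and-join recursion as soon as the orbits are allowed to be
an arbitrary partition `π`, and its solution is `r!` times a product of weights `n ^ (m - 3) * ∏ wₖ`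
over the blocks of `π`, where the block has `n` points and is made of `m` cycles, of lengths `k`.

The sums over all ways to split a block are evaluated by Hurwitz's multivariate form of Abel's
binomial theorem. What remains are identities between convolutions of the coefficients `k ^ k / k!`,
which follow from the binomial theorem after a partial fraction expansion.
-/

namespace Hurwitz

open Finset

section AbelHurwitz

variable {ι R : Type*}

theorem sum_powerset_neg_one_pow_card_mul_add_sum_pow [CommRing R] (a : ι → R) (U : Finset ι)
    (x : R) {d : ℕ} (hd : d < #U) :
    ∑ S ∈ U.powerset, (-1) ^ #S * (x + ∑ i ∈ S, a i) ^ d = 0 := by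
  classical
  induction U using Finset.induction_on generalizing d with
  | empty => simp at hd
  | insert j U hj ih =>
    rw [card_insert_of_notMem hj] at hd
    have hterm (S) (hS : S ∈ U.powerset) :
        (-1) ^ #S * (x + ∑ i ∈ S, a i) ^ d +
            (-1) ^ #(insert j S) * (x + ∑ i ∈ insert j S, a i) ^ d =
          -∑ e ∈ range d, d.choose e * a j ^ (d - e) * ((-1) ^ #S * (x + ∑ i ∈ S, a i) ^ e) := by
      have hjS : j ∉ S := fun h => hj (mem_powerset.1 hS h)
      rw [card_insert_of_notMem hjS, sum_insert hjS, add_comm (a j), ← add_assoc, add_pow (x + _),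
        sum_range_succ, Nat.sub_self, Nat.choose_self, Nat.cast_one, pow_zero, pow_succ]
      have hcomm : ∑ e ∈ range d,
          d.choose e * a j ^ (d - e) * ((-1) ^ #S * (x + ∑ i ∈ S, a i) ^ e) =
          (-1) ^ #S * ∑ e ∈ range d, (x + ∑ i ∈ S, a i) ^ e * a j ^ (d - e) * d.choose e := by
        rw [mul_sum]
        exact sum_congr rfl fun _ _ => by ring
      rw [hcomm]
      ring
    rw [sum_powerset_insert hj, ← sum_add_distrib, sum_congr rfl hterm, sum_neg_distrib, sum_comm,
      neg_eq_zero]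
    refine sum_eq_zero fun e he => ?_
    rw [← mul_sum, ih (by have := mem_range.1 he; omega), mul_zero]

variable [DecidableEq ι]

theorem sum_powerset_sdiff [AddCommMonoid R] (C : Finset ι) (f : Finset ι → Finset ι → R) :
    ∑ S ∈ C.powerset, f (C \ S) S = ∑ S ∈ C.powerset, f S (C \ S) := by
  refine sum_nbij' (C \ ·) (C \ ·) ?_ ?_ ?_ ?_ ?_ <;> intro S hS
  · simp
  · simp
  · exact Finset.sdiff_sdiff_eq_self (mem_powerset.1 hS)
  · exact Finset.sdiff_sdiff_eq_self (mem_powerset.1 hS)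
  · rw [Finset.sdiff_sdiff_eq_self (mem_powerset.1 hS)]

theorem sum_powerset_sum_mem_erase [AddCommMonoid R] (C : Finset ι)
    (F : ι → Finset ι → Finset ι → R) :
    ∑ S ∈ C.powerset, ∑ j ∈ S, F j (S.erase j) (C \ S) =
      ∑ j ∈ C, ∑ S ∈ (C.erase j).powerset, F j S (C.erase j \ S) := by
  rw [sum_comm' (t' := C) (s' := fun j => {S ∈ C.powerset | j ∈ S}) (fun S j => by
    simp only [mem_powerset, mem_filter]
    exact ⟨fun h => ⟨h, h.1 h.2⟩, fun h => h.1⟩)]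
  refine sum_congr rfl fun j hj => ?_
  refine sum_nbij' (fun S => S.erase j) (insert j) ?_ ?_ ?_ ?_ ?_ <;> intro S hS
  · simp only [mem_filter, mem_powerset] at hS ⊢
    exact erase_subset_erase _ hS.1
  · simp only [mem_filter, mem_powerset] at hS ⊢
    exact ⟨insert_subset hj (hS.trans (erase_subset _ _)), mem_insert_self _ _⟩
  · exact insert_erase (mem_filter.1 hS).2
  · exact erase_insert fun h => notMem_erase j C (mem_powerset.1 hS h)
  · have hsdiff : C.erase j \ S.erase j = C \ S := by
      ext i
      have := (mem_filter.1 hS).2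
      grind
    rw [hsdiff]

theorem sum_powerset_sum_powerset_sdiff [AddCommMonoid R] (C : Finset ι)
    (F : Finset ι → Finset ι → R) :
    ∑ S ∈ C.powerset, ∑ T ∈ (C \ S).powerset, F S T =
      ∑ U ∈ C.powerset, ∑ S ∈ U.powerset, F S (U \ S) := by
  rw [sum_sigma', sum_sigma']
  refine sum_bij' (fun p _ => ⟨p.1 ∪ p.2, p.1⟩) (fun p _ => ⟨p.2, p.1 \ p.2⟩) ?_ ?_ ?_ ?_ ?_ <;>
    rintro ⟨S, T⟩ h <;> simp only [mem_sigma, mem_powerset] at h ⊢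
  · exact ⟨union_subset h.1 (h.2.trans sdiff_subset), subset_union_left⟩
  · exact ⟨h.2.trans h.1, sdiff_subset_sdiff h.1 le_rfl⟩
  · rw [union_sdiff_cancel_left (disjoint_sdiff.mono_right h.2)]
  · rw [union_sdiff_of_subset h.2]
  · rw [union_sdiff_cancel_left (disjoint_sdiff.mono_right h.2)]

variable [CommRing R]

/-- The Abel–Hurwitz polynomial `x (x + ∑ i ∈ S, a i) ^ (#S - 1)`, the multivariate analogue of
the Abel polynomial `x (x + n a) ^ (n - 1)`. Its value on `∅`, where the exponent would be `-1`,
is `x * x⁻¹ = 1`. -/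
def abelPoly (a : ι → R) (x : R) (S : Finset ι) : R :=
  if S = ∅ then 1 else x * (x + ∑ i ∈ S, a i) ^ (#S - 1)

@[simp]
theorem abelPoly_empty (a : ι → R) (x : R) : abelPoly a x ∅ = 1 := if_pos rfl

theorem abelPoly_of_nonempty (a : ι → R) (x : R) {S : Finset ι} (hS : S.Nonempty) :
    abelPoly a x S = x * (x + ∑ i ∈ S, a i) ^ (#S - 1) := if_neg hS.ne_empty

theorem abelPoly_mul_add_sum (a : ι → R) (x : R) (S : Finset ι) :
    abelPoly a x S * (x + ∑ i ∈ S, a i) = x * (x + ∑ i ∈ S, a i) ^ #S := by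
  obtain rfl | hS := S.eq_empty_or_nonempty
  · simp
  · rw [abelPoly_of_nonempty a x hS, mul_assoc, pow_sub_one_mul hS.card_ne_zero]

theorem abelPoly_mul_add_sum_pow (a : ι → R) (x : R) {S U : Finset ι} (hU : U.Nonempty)
    (hSU : S ⊆ U) :
    abelPoly a x S * (x + ∑ i ∈ S, a i) ^ #(U \ S) = x * (x + ∑ i ∈ S, a i) ^ (#U - 1) := by
  obtain rfl | hS := S.eq_empty_or_nonempty
  · simp [mul_pow_sub_one hU.card_ne_zero]
  · rw [abelPoly_of_nonempty a x hS, mul_assoc, ← pow_add, card_sdiff_of_subset hSU,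
      add_comm (#S - 1), Nat.sub_add_sub_cancel (card_le_card hSU) hS.card_pos]

theorem abelPoly_eq_sub_sum (a : ι → R) (x : R) (S : Finset ι) :
    abelPoly a x S = (x + ∑ i ∈ S, a i) ^ #S -
      ∑ j ∈ S, a j * (x + a j + ∑ i ∈ S.erase j, a i) ^ #(S.erase j) := by
  obtain rfl | hS := S.eq_empty_or_nonempty
  · simp
  · have hterm (j) (hj : j ∈ S) : a j * (x + a j + ∑ i ∈ S.erase j, a i) ^ #(S.erase j) =
        a j * (x + ∑ i ∈ S, a i) ^ (#S - 1) := by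
      rw [add_assoc, add_sum_erase S a hj, card_erase_of_mem hj]
    rw [sum_congr rfl hterm, ← sum_mul, abelPoly_of_nonempty a x hS,
      ← mul_pow_sub_one hS.card_ne_zero]
    ring

/-- **Hurwitz's form of Abel's binomial theorem**. -/
theorem sum_powerset_abelPoly_mul_add_sum_pow (a : ι → R) (x y : R) (C : Finset ι) :
    ∑ S ∈ C.powerset, abelPoly a x S * (y + ∑ i ∈ C \ S, a i) ^ #(C \ S) =
      (x + y + ∑ i ∈ C, a i) ^ #C := by
  set z := x + y + ∑ i ∈ C, a i with hz
  have hexpand (S) (hS : S ∈ C.powerset) :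
      abelPoly a x S * (y + ∑ i ∈ C \ S, a i) ^ #(C \ S) = ∑ T ∈ (C \ S).powerset,
        abelPoly a x S * (-(x + ∑ i ∈ S, a i)) ^ #T * z ^ (#C - #(S ∪ T)) := by
    have hSC := mem_powerset.1 hS
    have hy : y + ∑ i ∈ C \ S, a i = -(x + ∑ i ∈ S, a i) + z := by
      rw [hz, ← sum_sdiff hSC]; ring
    rw [hy, ← sum_pow_mul_eq_add_pow, mul_sum]
    refine sum_congr rfl fun T hT => ?_
    rw [card_union_of_disjoint (disjoint_sdiff.mono_right (mem_powerset.1 hT)), mul_assoc,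
      card_sdiff_of_subset hSC, Nat.sub_sub]
  rw [sum_congr rfl hexpand, sum_powerset_sum_powerset_sdiff C fun S T =>
    abelPoly a x S * (-(x + ∑ i ∈ S, a i)) ^ #T * z ^ (#C - #(S ∪ T)),
    sum_eq_single_of_mem ∅ (empty_mem_powerset C)]
  · simp
  intro U _ hU
  have hU := nonempty_iff_ne_empty.2 hU
  have hterm (S) (hS : S ∈ U.powerset) :
      abelPoly a x S * (-(x + ∑ i ∈ S, a i)) ^ #(U \ S) * z ^ (#C - #(S ∪ U \ S)) =
        x * z ^ (#C - #U) * (-1) ^ #U * ((-1) ^ #S * (x + ∑ i ∈ S, a i) ^ (#U - 1)) := by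
    have hSU := mem_powerset.1 hS
    have hsign : (-1 : R) ^ #(U \ S) = (-1) ^ #U * (-1) ^ #S := by
      rw [← card_sdiff_add_card_eq_card hSU, pow_add, mul_assoc, ← mul_pow]
      simp
    rw [union_sdiff_of_subset hSU, neg_pow, hsign]
    linear_combination
      (-1) ^ #U * (-1) ^ #S * z ^ (#C - #U) * abelPoly_mul_add_sum_pow a x hU hSU
  rw [sum_congr rfl hterm, ← mul_sum, sum_powerset_neg_one_pow_card_mul_add_sum_pow a U x
    (Nat.sub_one_lt hU.card_ne_zero), mul_zero]

theorem sum_powerset_abelPoly_mul_abelPoly (a : ι → R) (x y : R) (C : Finset ι) :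
    ∑ S ∈ C.powerset, abelPoly a x S * abelPoly a y (C \ S) = abelPoly a (x + y) C := by
  have hterm (S) (_ : S ∈ C.powerset) : abelPoly a x (C \ S) * abelPoly a y S =
      abelPoly a x (C \ S) * (y + ∑ i ∈ S, a i) ^ #S -
        ∑ j ∈ S, a j * (abelPoly a x (C \ S) *
          (y + a j + ∑ i ∈ S.erase j, a i) ^ #(S.erase j)) := by
    rw [abelPoly_eq_sub_sum a y S, mul_sub, mul_sum]
    simp only [mul_left_comm]
  rw [← sum_powerset_sdiff C fun S T => abelPoly a x S * abelPoly a y T, sum_congr rfl hterm,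
    sum_sub_distrib, sum_powerset_sdiff C fun S T => abelPoly a x S * (y + ∑ i ∈ T, a i) ^ #T,
    sum_powerset_abelPoly_mul_add_sum_pow, sum_powerset_sum_mem_erase C fun j T S =>
      a j * (abelPoly a x S * (y + a j + ∑ i ∈ T, a i) ^ #T), abelPoly_eq_sub_sum a (x + y) C]
  congr 1
  refine sum_congr rfl fun j _ => ?_
  rw [sum_powerset_sdiff (C.erase j) fun S T =>
      a j * (abelPoly a x S * (y + a j + ∑ i ∈ T, a i) ^ #T), ← mul_sum,
    sum_powerset_abelPoly_mul_add_sum_pow]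
  simp only [add_assoc]

end AbelHurwitz

section OrderedField

variable {ι K : Type*} [Field K] [LinearOrder K] [IsStrictOrderedRing K] {a : ι → K} {x y : K}

theorem add_sum_pos (ha : ∀ i, 0 ≤ a i) (hx : 0 < x) (S : Finset ι) : 0 < x + ∑ i ∈ S, a i :=
  add_pos_of_pos_of_nonneg hx (sum_nonneg fun i _ => ha i)

variable [DecidableEq ι]

/-- The rational companion `x ^ 2 (x + ∑ i ∈ S, a i) ^ (#S - 2)` of the Abel–Hurwitz polynomial:
up to the factor `x ^ 2`, this is the weight which a block made of a cycle of length `x` and of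
the cycles of length `a i`, `i ∈ S`, contributes to the Hurwitz count. -/
def abelFrac (a : ι → K) (x : K) (S : Finset ι) : K :=
  x / (x + ∑ i ∈ S, a i) * abelPoly a x S

theorem abelPoly_eq_zpow (ha : ∀ i, 0 ≤ a i) (hx : 0 < x) (S : Finset ι) :
    abelPoly a x S = x * (x + ∑ i ∈ S, a i) ^ (#S - 1 : ℤ) := by
  have hne := (add_sum_pos ha hx S).ne'
  rw [zpow_sub_one₀ hne, zpow_natCast, ← mul_assoc, ← abelPoly_mul_add_sum,
    mul_inv_cancel_right₀ hne]

theorem abelFrac_eq_zpow (ha : ∀ i, 0 ≤ a i) (hx : 0 < x) (S : Finset ι) :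
    abelFrac a x S = x ^ 2 * (x + ∑ i ∈ S, a i) ^ (#S - 2 : ℤ) := by
  have hne := (add_sum_pos ha hx S).ne'
  rw [abelFrac, abelPoly_eq_zpow ha hx, show (#S - 1 : ℤ) = #S - 2 + 1 by ring,
    zpow_add_one₀ hne]
  field_simp

theorem abelFrac_mul_add_sum (ha : ∀ i, 0 ≤ a i) (hx : 0 < x) (S : Finset ι) :
    abelFrac a x S * (x + ∑ i ∈ S, a i) = x * abelPoly a x S := by
  rw [abelFrac, mul_right_comm, div_mul_cancel₀ _ (add_sum_pos ha hx S).ne']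

theorem abelFrac_eq_sub_sum (ha : ∀ i, 0 ≤ a i) (hx : 0 < x) (S : Finset ι) :
    abelFrac a x S = abelPoly a x S -
      ∑ j ∈ S, x * a j / (x + a j) * abelPoly a (x + a j) (S.erase j) := by
  have hne := (add_sum_pos ha hx S).ne'
  have hterm (j) (hj : j ∈ S) : x * a j / (x + a j) * abelPoly a (x + a j) (S.erase j) =
      a j * (x * (x + ∑ i ∈ S, a i) ^ (#S - 2 : ℤ)) := by
    have hxj := add_pos_of_pos_of_nonneg hx (ha j)
    rw [abelPoly_eq_zpow ha hxj, add_assoc x, add_sum_erase S a hj, card_erase_of_mem hj,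
      Nat.cast_pred (card_pos.2 ⟨j, hj⟩), sub_sub, one_add_one_eq_two]
    field_simp
  rw [sum_congr rfl hterm, ← sum_mul, abelFrac_eq_zpow ha hx, abelPoly_eq_zpow ha hx,
    show (#S - 1 : ℤ) = #S - 2 + 1 by ring, zpow_add_one₀ hne]
  ring

theorem sum_powerset_abelFrac_mul_abelPoly (ha : ∀ i, 0 ≤ a i) (hx : 0 < x) (y : K)
    (C : Finset ι) :
    ∑ S ∈ C.powerset, abelFrac a x S * abelPoly a y (C \ S) = abelPoly a (x + y) C -
      ∑ j ∈ C, x * a j / (x + a j) * abelPoly a (x + y + a j) (C.erase j) := by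
  simp only [abelFrac_eq_sub_sum ha hx, sub_mul, sum_sub_distrib, sum_mul]
  rw [sum_powerset_abelPoly_mul_abelPoly, sum_powerset_sum_mem_erase C fun j S T =>
    x * a j / (x + a j) * abelPoly a (x + a j) S * abelPoly a y T]
  simp only [mul_assoc, ← mul_sum, sum_powerset_abelPoly_mul_abelPoly, add_right_comm]

theorem sum_powerset_abelFrac_mul_abelFrac (ha : ∀ i, 0 ≤ a i) (hx : 0 < x) (hy : 0 < y)
    (C : Finset ι) :
    (x + y + ∑ i ∈ C, a i) * ∑ S ∈ C.powerset, abelFrac a x S * abelFrac a y (C \ S) =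
      (x + y) * abelPoly a (x + y) C - x * y * ∑ j ∈ C, a j * (1 / (x + a j) + 1 / (y + a j)) *
        abelPoly a (x + y + a j) (C.erase j) := by
  have hterm (S) (hS : S ∈ C.powerset) :
      (x + y + ∑ i ∈ C, a i) * (abelFrac a x S * abelFrac a y (C \ S)) =
        x * (abelFrac a y (C \ S) * abelPoly a x S) +
          y * (abelFrac a x S * abelPoly a y (C \ S)) := by
    rw [← sum_sdiff (mem_powerset.1 hS)]
    linear_combination abelFrac a y (C \ S) * abelFrac_mul_add_sum ha hx S +
      abelFrac a x S * abelFrac_mul_add_sum ha hy (C \ S)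
  rw [mul_sum, sum_congr rfl hterm, sum_add_distrib, ← mul_sum, ← mul_sum,
    sum_powerset_sdiff C fun S T => abelFrac a y S * abelPoly a x T,
    sum_powerset_abelFrac_mul_abelPoly ha hx, sum_powerset_abelFrac_mul_abelPoly ha hy,
    add_comm y x]
  simp only [mul_add, add_mul, sum_add_distrib, mul_sub, mul_sum]
  have hcomm (u v : K) (j) :
      u * v * (a j * (1 / (u + a j)) * abelPoly a (x + y + a j) (C.erase j)) =
      v * (u * a j / (u + a j) * abelPoly a (x + y + a j) (C.erase j)) := by ring
  simp only [hcomm]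
  simp only [mul_comm x y, hcomm]
  ring

end OrderedField

section TreeCoefficients

open Nat Polynomial

theorem prod_range_erase_cast_sub {R : Type*} [CommRing R] {b q : ℕ} (hb : b ≤ q) :
    ∏ j ∈ (range (q + 1)).erase b, ((j : R) - b) = (-1) ^ b * (b ! * (q - b)!) := by
  have hsplit : (range (q + 1)).erase b = range b ∪ Ico (b + 1) (q + 1) := by grind
  have hdisj : Disjoint (range b) (Ico (b + 1) (q + 1)) := by
    rw [disjoint_left]
    grind
  have hbelow : ∏ j ∈ range b, ((j : R) - b) = (-1) ^ b * b ! := by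
    rw [← prod_range_add_one_eq_factorial, ← prod_range_reflect, cast_prod, ← card_range b,
      ← prod_const, card_range, ← prod_mul_distrib]
    refine prod_congr rfl fun j hj => ?_
    rw [cast_sub (by grind), cast_sub (by grind)]
    push_cast
    ring
  have habove : ∏ j ∈ Ico (b + 1) (q + 1), ((j : R) - b) = (q - b)! := by
    rw [prod_Ico_eq_prod_range, Nat.add_sub_add_right, ← prod_range_add_one_eq_factorial,
      cast_prod]
    refine prod_congr rfl fun j _ => ?_
    push_cast
    ring
  rw [hsplit, prod_union hdisj, hbelow, habove, mul_assoc]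

/-- Partial fractions of `p / (X (X + 1) ⋯ (X + q))`: this is Lagrange interpolation of `p` at the
nodes `0, -1, …, -q`. -/
theorem sum_eval_neg_div_factorial_eq_eval_div_prod {K : Type*} [Field K] [CharZero K] (p : K[X])
    {q : ℕ} (hp : p.natDegree ≤ q) {x : K} (hx : ∀ b : ℕ, x + b ≠ 0) :
    ∑ b ∈ range (q + 1), (-1) ^ b * p.eval (-b : K) / (b ! * (q - b)!) / (x + b) =
      p.eval x / ∏ i ∈ range (q + 1), (x + i) := by
  have hinj : Set.InjOn (fun b : ℕ => (-b : K)) (range (q + 1)) := fun b _ c _ h => by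
    simpa using h
  have hdeg : p.degree < #(range (q + 1)) := by
    rw [card_range]
    exact degree_le_natDegree.trans_lt (by exact_mod_cast Nat.lt_succ_of_le hp)
  have hnode (b : ℕ) (_ : b ∈ range (q + 1)) : x ≠ -b := fun h => hx b (by simp [h])
  have heval := Lagrange.eval_interpolate_not_at_node (fun b : ℕ => p.eval (-b : K)) hnode
  rw [← Lagrange.eq_interpolate hinj hdeg, Lagrange.eval_nodal] at heval
  simp only [sub_neg_eq_add] at heval
  rw [heval, mul_div_cancel_left₀ _ (prod_ne_zero_iff.2 fun b _ => hx b)]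
  refine sum_congr rfl fun b hb => ?_
  have hweight : Lagrange.nodalWeight (range (q + 1)) (fun b : ℕ => (-b : K)) b =
      (-1) ^ b / (b ! * (q - b)!) := by
    simp only [Lagrange.nodalWeight, sub_neg_eq_add, neg_add_eq_sub]
    rw [prod_inv_distrib, prod_range_erase_cast_sub (by grind), mul_inv, ← inv_pow, inv_neg_one,
      div_eq_mul_inv]
  rw [hweight]
  ring

theorem add_pow_div_factorial {K : Type*} [Field K] [CharZero K] (x y : K) (n : ℕ) :
    (x + y) ^ n / n ! = ∑ i ∈ range (n + 1), x ^ i / i ! * (y ^ (n - i) / (n - i)!) := by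
  rw [add_pow, sum_div]
  refine sum_congr rfl fun i hi => ?_
  rw [cast_choose K (by grind : i ≤ n)]
  have := cast_ne_zero (R := K).2 n.factorial_ne_zero
  field_simp

/-- The coefficient `k ^ k / k!` of `z ^ k` in `1 / (1 - T z)`, where `T = z exp T` is the
generating function of rooted trees. -/
def treeCoeff (k : ℕ) : ℚ := k ^ k / k !

theorem treeCoeff_zero : treeCoeff 0 = 1 := by simp [treeCoeff]

theorem treeCoeff_pos (k : ℕ) : 0 < treeCoeff k :=
  div_pos (mod_cast k.pow_self_pos) (mod_cast k.factorial_pos)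

theorem sum_range_treeCoeff_mul_div (k : ℕ) :
    ∑ b ∈ range (k + 1), treeCoeff (b + 1) * treeCoeff (k - b) / (b + 1) = treeCoeff (k + 1) := by
  have habel := sum_powerset_abelPoly_mul_add_sum_pow (fun _ : ℕ => (1 : ℚ)) 1 0 (range k)
  have hterm (S) (hS : S ∈ (range k).powerset) :
      abelPoly (fun _ => (1 : ℚ)) 1 S * (0 + ∑ _i ∈ range k \ S, 1) ^ #(range k \ S) =
        (1 + #S : ℚ) ^ (#S - 1 : ℤ) * ((k - #S : ℕ) : ℚ) ^ (k - #S) := by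
    rw [abelPoly_eq_zpow (fun _ => zero_le_one) one_pos, sum_const, sum_const,
      card_sdiff_of_subset (mem_powerset.1 hS), card_range]
    simp
  rw [sum_congr rfl hterm, sum_powerset_apply_card
    (fun b => (1 + b : ℚ) ^ (b - 1 : ℤ) * ((k - b : ℕ) : ℚ) ^ (k - b)), card_range] at habel
  have hk : treeCoeff (k + 1) = (1 + 0 + ∑ _i ∈ range k, 1) ^ k / k ! := by
    simp only [treeCoeff, factorial_succ, pow_succ, sum_const, card_range]
    push_cast
    field_simp
    ring
  rw [hk, ← habel, sum_div]
  refine sum_congr rfl fun b hb => ?_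
  have hb1 : (1 + b : ℚ) ≠ 0 := by positivity
  rw [treeCoeff, treeCoeff, nsmul_eq_mul, cast_choose ℚ (by grind : b ≤ k), factorial_succ,
    zpow_sub_one₀ hb1, zpow_natCast, pow_succ]
  push_cast
  field_simp
  ring

theorem sum_Ico_treeCoeff_mul_div {k : ℕ} (hk : 0 < k) :
    ∑ b ∈ Ico 1 k, treeCoeff b * treeCoeff (k - b) / b = treeCoeff k * (1 - 1 / k) := by
  obtain ⟨k, rfl⟩ := Nat.exists_eq_add_one.2 hk
  have h := sum_range_treeCoeff_mul_div k
  rw [sum_range_succ, Nat.sub_self, treeCoeff_zero] at h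
  rw [sum_Ico_eq_sum_range, Nat.add_sub_cancel]
  simp only [add_comm 1, Nat.add_sub_add_right]
  push_cast at h ⊢
  linear_combination h

theorem treeCoeff_mul_treeCoeff {b k : ℕ} (hb : b ≤ k) :
    treeCoeff b * treeCoeff (k - b) = ∑ q ∈ Ico b (k + 1),
      (-1) ^ b * (-b : ℚ) ^ q / (b ! * (q - b)!) * (k ^ (k - q) / (k - q)!) := by
  have hexpand := add_pow_div_factorial (-b : ℚ) k (k - b)
  rw [neg_add_eq_sub, ← cast_sub hb] at hexpand
  rw [sum_Ico_eq_sum_range, Nat.sub_add_comm hb, treeCoeff, treeCoeff, hexpand, mul_sum]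
  refine sum_congr rfl fun r _ => ?_
  have hsign : (b : ℚ) ^ b = (-1) ^ b * (-b) ^ b := by rw [← mul_pow, neg_one_mul, neg_neg]
  rw [hsign, Nat.add_sub_cancel_left, Nat.sub_sub, pow_add]
  ring

theorem sum_treeCoeff_mul_treeCoeff_mul (k : ℕ) (w : ℕ → ℚ) :
    ∑ b ∈ range (k + 1), treeCoeff b * treeCoeff (k - b) * w b =
      ∑ q ∈ range (k + 1), (∑ b ∈ range (q + 1), (-1) ^ b * (-b : ℚ) ^ q / (b ! * (q - b)!) * w b) *
        (k ^ (k - q) / (k - q)!) := by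
  have hterm (b) (hb : b ∈ range (k + 1)) : treeCoeff b * treeCoeff (k - b) * w b =
      ∑ q ∈ Ico b (k + 1), (-1) ^ b * (-b : ℚ) ^ q / (b ! * (q - b)!) * w b *
        (k ^ (k - q) / (k - q)!) := by
    rw [treeCoeff_mul_treeCoeff (by grind), sum_mul]
    exact sum_congr rfl fun _ _ => mul_right_comm _ _ _
  simp only [sum_congr rfl hterm, sum_mul]
  exact sum_comm' (by grind)

theorem treeCoeff_mul_pow_div_prod {l : ℕ} (hl : 0 < l) (q : ℕ) :
    treeCoeff l * (l * (l ^ q / ∏ i ∈ range (q + 1), ((l : ℚ) + i))) =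
      l ^ (l + q) / (l + q)! := by
  have hfact : (l ! : ℚ) * ∏ i ∈ range (q + 1), ((l : ℚ) + i) = l * (l + q)! := by
    have h := factorial_mul_ascFactorial' l (q + 1) hl
    rw [ascFactorial_eq_prod_range, ← add_assoc, Nat.add_sub_cancel] at h
    rw [← mul_factorial_pred hl.ne', ← h]
    push_cast
    ring
  have hprod : ∏ i ∈ range (q + 1), ((l : ℚ) + i) ≠ 0 := prod_ne_zero_iff.2 fun i _ => by positivity
  rw [treeCoeff, pow_add]
  field_simp
  linear_combination -hfact

theorem treeCoeff_mul_sum_treeCoeff_mul_div (k : ℕ) {l : ℕ} (hl : 0 < l) :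
    treeCoeff l * ∑ b ∈ range (k + 1), treeCoeff b * treeCoeff (k - b) * (l / (l + b)) =
      ∑ q ∈ range (k + 1), (l : ℚ) ^ (l + q) / (l + q)! * (k ^ (k - q) / (k - q)!) := by
  rw [sum_treeCoeff_mul_treeCoeff_mul, mul_sum]
  refine sum_congr rfl fun q _ => ?_
  have hfrac := sum_eval_neg_div_factorial_eq_eval_div_prod (X ^ q : ℚ[X])
    (natDegree_X_pow_le q) (x := l) fun b => by positivity
  simp only [eval_pow, eval_X] at hfrac
  rw [← treeCoeff_mul_pow_div_prod hl, ← hfrac, mul_sum, mul_assoc]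
  congr 2
  exact sum_congr rfl fun b _ => by ring

theorem sum_treeCoeff_add_sum_treeCoeff {k l : ℕ} (hk : 0 < k) (hl : 0 < l) :
    treeCoeff l * ∑ b ∈ range (k + 1), treeCoeff b * treeCoeff (k - b) * (l / (l + b)) +
        treeCoeff k * ∑ b ∈ range (l + 1), treeCoeff b * treeCoeff (l - b) * (k / (k + b)) =
      treeCoeff (k + l) + treeCoeff k * treeCoeff l := by
  rw [treeCoeff_mul_sum_treeCoeff_mul_div k hl, treeCoeff_mul_sum_treeCoeff_mul_div l hk]
  let t (i : ℕ) : ℚ := (l : ℚ) ^ i / i ! * (k ^ (k + l - i) / (k + l - i)!)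
  have ht (i) : t i = (l : ℚ) ^ i / i ! * (k ^ (k + l - i) / (k + l - i)!) := rfl
  have hbinom : treeCoeff (k + l) = ∑ i ∈ range (k + l + 1), t i := by
    rw [treeCoeff, cast_add, add_comm (k : ℚ), add_pow_div_factorial]
  have hhigh : ∑ q ∈ range (k + 1), (l : ℚ) ^ (l + q) / (l + q)! * (k ^ (k - q) / (k - q)!) =
      ∑ i ∈ Ico l (k + l + 1), t i := by
    rw [sum_Ico_eq_sum_range, show k + l + 1 - l = k + 1 by omega]
    refine sum_congr rfl fun q _ => ?_
    rw [ht, show k + l - (l + q) = k - q by omega]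
  have hlow : ∑ q ∈ range (l + 1), (k : ℚ) ^ (k + q) / (k + q)! * (l ^ (l - q) / (l - q)!) =
      ∑ i ∈ range (l + 1), t i := by
    rw [← sum_range_reflect]
    refine sum_congr rfl fun i hi => ?_
    rw [ht, show l + 1 - 1 - i = l - i by omega, show k + (l - i) = k + l - i by grind,
      show l - (l - i) = i by grind, mul_comm]
  have hmid : t l = treeCoeff k * treeCoeff l := by
    rw [ht, Nat.add_sub_cancel, mul_comm, treeCoeff, treeCoeff]
  rw [hhigh, hlow, hbinom, ← hmid, sum_range_succ t l, ← add_assoc,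
    add_comm (∑ i ∈ Ico _ _, t i), sum_range_add_sum_Ico _ (by omega)]

/-- The convolution of `treeCoeff` with itself at `k`, the end terms left out and the term at `d`
damped by the factor `l / (l + d)`. -/
def treeConv (k l : ℕ) : ℚ :=
  ∑ d ∈ Ico 1 k, treeCoeff d * treeCoeff (k - d) * (l / (l + d))

theorem treeCoeff_add {k l : ℕ} (hk : 0 < k) (hl : 0 < l) :
    treeCoeff (k + l) = 2 * (treeCoeff k * treeCoeff l) +
      treeCoeff l * treeConv k l + treeCoeff k * treeConv l k := by
  have hends {k l : ℕ} (hk : 0 < k) (hl : 0 < l) :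
      ∑ b ∈ range (k + 1), treeCoeff b * treeCoeff (k - b) * (l / (l + b) : ℚ) =
        treeConv k l + treeCoeff k * (1 + l / (l + k)) := by
    have : (l : ℚ) ≠ 0 := by positivity
    rw [sum_range_succ, range_eq_Ico, sum_eq_sum_Ico_succ_bot hk, Nat.sub_self, Nat.sub_zero,
      treeCoeff_zero, cast_zero, add_zero, div_self this, treeConv]
    ring
  have h := sum_treeCoeff_add_sum_treeCoeff hk hl
  rw [hends hk hl, hends hl hk] at h
  have hne : (k + l : ℚ) ≠ 0 := by positivity
  have hone : (l / (l + k) + k / (k + l) : ℚ) = 1 := by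
    rw [add_comm (l : ℚ) k, ← add_div, add_comm (l : ℚ) k, div_self hne]
  linear_combination -h + treeCoeff k * treeCoeff l * hone

theorem sum_Ico_treeCoeff_mul_add_reflect (k : ℕ) (f : ℕ → ℚ) :
    ∑ d ∈ Ico 1 k, treeCoeff d * treeCoeff (k - d) * (f d + f (k - d)) =
      2 * ∑ d ∈ Ico 1 k, treeCoeff d * treeCoeff (k - d) * f d := by
  have hreflect : ∑ d ∈ Ico 1 k, treeCoeff d * treeCoeff (k - d) * f (k - d) =
      ∑ d ∈ Ico 1 k, treeCoeff d * treeCoeff (k - d) * f d := by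
    refine sum_nbij' (k - ·) (k - ·) ?_ ?_ ?_ ?_ ?_ <;> intro d hd
    · grind
    · grind
    · grind
    · grind
    · rw [Nat.sub_sub_self (mem_Ico.1 hd).2.le, mul_comm (treeCoeff d)]
  simp only [mul_add, sum_add_distrib, hreflect, two_mul]

end TreeCoefficients

section BlockWeight

open Nat

variable {ι : Type*} [DecidableEq ι]

/-- The factor `k * k ^ k / k!` which a cycle of length `k` contributes to the Hurwitz count. -/
def cycleWeight (k : ℕ) : ℚ := k * treeCoeff k

/-- The Hurwitz weight of a transitivity block which is a union of cycles, indexed by `C`, of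
lengths `a i`. -/
def blockWeight (a : ι → ℕ) (C : Finset ι) : ℚ :=
  (∑ i ∈ C, (a i : ℚ)) ^ (#C - 3 : ℤ) * ∏ i ∈ C, cycleWeight (a i)

/-- The Hurwitz weight of a transitivity block made of one cycle of length `x` and of the cycles
indexed by `S`, of lengths `a i`. -/
def pointedWeight (a : ι → ℕ) (x : ℕ) (S : Finset ι) : ℚ :=
  (x + ∑ i ∈ S, (a i : ℚ)) ^ (#S - 2 : ℤ) * (cycleWeight x * ∏ i ∈ S, cycleWeight (a i))

theorem blockWeight_insert (a : ι → ℕ) {i : ι} {S : Finset ι} (hi : i ∉ S) :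
    blockWeight a (insert i S) = pointedWeight a (a i) S := by
  rw [blockWeight, pointedWeight, sum_insert hi, prod_insert hi, card_insert_of_notMem hi]
  push_cast
  congr 2
  ring

theorem pointedWeight_eq_abelFrac (a : ι → ℕ) {x : ℕ} (hx : 0 < x) (S : Finset ι) :
    pointedWeight a x S = abelFrac (fun i => (a i : ℚ)) x S * (treeCoeff x / x) *
      ∏ i ∈ S, cycleWeight (a i) := by
  have hx' : (0 : ℚ) < x := cast_pos.2 hx
  rw [pointedWeight, abelFrac_eq_zpow (fun i => (a i).cast_nonneg) hx', cycleWeight]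
  field_simp

theorem sum_pointedWeight_mul_pointedWeight (a : ι → ℕ) {d k : ℕ} (hd : d ∈ Ico 1 k)
    (D : Finset ι) :
    (k + ∑ i ∈ D, (a i : ℚ)) *
        ∑ S ∈ D.powerset, pointedWeight a d S * pointedWeight a (k - d) (D \ S) =
      (∏ i ∈ D, cycleWeight (a i)) * (treeCoeff d * treeCoeff (k - d) *
        (abelPoly (fun i => (a i : ℚ)) k D * (1 / d + 1 / (k - d : ℕ)) -
          ∑ j ∈ D, abelPoly (fun i => (a i : ℚ)) (k + a j) (D.erase j) *
            (a j / (a j + d) + a j / (a j + (k - d : ℕ))))) := by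
  obtain ⟨hd0, hdk⟩ := mem_Ico.1 hd
  have hx : (0 : ℚ) < d := cast_pos.2 hd0
  have hy : (0 : ℚ) < (k - d : ℕ) := cast_pos.2 (Nat.sub_pos_of_lt hdk)
  have hterm (S) (hS : S ∈ D.powerset) :
      pointedWeight a d S * pointedWeight a (k - d) (D \ S) =
        (∏ i ∈ D, cycleWeight (a i)) * (treeCoeff d / d * (treeCoeff (k - d) / (k - d : ℕ))) *
          (abelFrac (fun i => (a i : ℚ)) d S *
            abelFrac (fun i => (a i : ℚ)) (k - d : ℕ) (D \ S)) := by
    rw [pointedWeight_eq_abelFrac a hd0, pointedWeight_eq_abelFrac a (Nat.sub_pos_of_lt hdk),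
      ← prod_sdiff (mem_powerset.1 hS)]
    ring
  have hsum := sum_powerset_abelFrac_mul_abelFrac (fun i => (a i).cast_nonneg) hx hy D
  rw [← cast_add, Nat.add_sub_cancel' hdk.le] at hsum
  rw [sum_congr rfl hterm, ← mul_sum, mul_left_comm, hsum]
  have hjs (j) : abelPoly (fun i => (a i : ℚ)) (k + a j) (D.erase j) *
      (a j / (a j + d) + a j / (a j + (k - d : ℕ))) =
      a j * (1 / (d + a j) + 1 / ((k - d : ℕ) + a j)) *
        abelPoly (fun i => (a i : ℚ)) (k + a j) (D.erase j) := by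
    rw [add_comm (a j : ℚ) d, add_comm (a j : ℚ) (k - d : ℕ)]
    ring
  have hinv : (1 / d + 1 / (k - d : ℕ) : ℚ) = k / (d * (k - d : ℕ)) := by
    rw [div_add_div _ _ hx.ne' hy.ne', one_mul, mul_one, add_comm, ← cast_add,
      Nat.add_sub_cancel' hdk.le]
  simp only [hjs]
  rw [hinv]
  field_simp

theorem sum_Ico_sum_pointedWeight (a : ι → ℕ) {k : ℕ} (hk : 0 < k) (D : Finset ι) :
    (k + ∑ i ∈ D, (a i : ℚ)) * ∑ d ∈ Ico 1 k,
        ∑ S ∈ D.powerset, pointedWeight a d S * pointedWeight a (k - d) (D \ S) =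
      2 * (∏ i ∈ D, cycleWeight (a i)) *
        (abelPoly (fun i => (a i : ℚ)) k D * (treeCoeff k * (1 - 1 / k)) -
          ∑ j ∈ D, abelPoly (fun i => (a i : ℚ)) (k + a j) (D.erase j) * treeConv k (a j)) := by
  rw [mul_sum, sum_congr rfl fun d hd => sum_pointedWeight_mul_pointedWeight a hd D, ← mul_sum,
    mul_comm 2, mul_assoc]
  congr 1
  have hfirst := sum_Ico_treeCoeff_mul_add_reflect k fun d => 1 / (d : ℚ)
  simp only [mul_one_div, sum_Ico_treeCoeff_mul_div hk] at hfirst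
  have hconv (j) : ∑ d ∈ Ico 1 k, treeCoeff d * treeCoeff (k - d) *
      (a j / (a j + d) + a j / (a j + (k - d : ℕ)) : ℚ) = 2 * treeConv k (a j) :=
    sum_Ico_treeCoeff_mul_add_reflect k fun d => (a j / (a j + d) : ℚ)
  simp only [mul_sub (treeCoeff _ * _), sum_sub_distrib, mul_sum D,
    mul_left_comm _ (abelPoly _ _ _)]
  rw [sum_comm, ← mul_sum, hfirst]
  simp only [← mul_sum, hconv, mul_left_comm _ (2 : ℚ)]
  ring

variable {a : ι → ℕ} {C : Finset ι}

theorem blockWeight_eq_pointedWeight {i : ι} (hi : i ∈ C) :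
    blockWeight a C = pointedWeight a (a i) (C.erase i) := by
  rw [← blockWeight_insert a (notMem_erase i C), insert_erase hi]

theorem sum_mul_cut_pointedWeight (ha : ∀ i ∈ C, 0 < a i) {i : ι} (hi : i ∈ C) :
    (∑ i ∈ C, (a i : ℚ)) * (a i * ∑ d ∈ Ico 1 (a i), ∑ S ∈ (C.erase i).powerset,
        pointedWeight a d S * pointedWeight a (a i - d) (C.erase i \ S)) =
      2 * blockWeight a C * ((∑ i ∈ C, (a i : ℚ)) * (a i - 1) -
        ∑ j ∈ C.erase i, (a i + a j) * (treeConv (a i) (a j) / treeCoeff (a i))) := by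
  have hcut := sum_Ico_sum_pointedWeight a (ha i hi) (C.erase i)
  have hai : (0 : ℚ) < a i := cast_pos.2 (ha i hi)
  have hn : a i + ∑ j ∈ C.erase i, (a j : ℚ) = ∑ j ∈ C, (a j : ℚ) :=
    add_sum_erase C (fun j => (a j : ℚ)) hi
  have hn0 : ∑ j ∈ C, (a j : ℚ) ≠ 0 := (sum_pos (fun i hi => cast_pos.2 (ha i hi)) ⟨i, hi⟩).ne'
  have hA : abelPoly (fun i => (a i : ℚ)) (a i) (C.erase i) =
      a i * (∑ j ∈ C, (a j : ℚ)) * (∑ j ∈ C, (a j : ℚ)) ^ (#C - 3 : ℤ) := by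
    rw [abelPoly_eq_zpow (fun i => (a i).cast_nonneg) hai, hn, cast_card_erase_of_mem hi,
      mul_assoc, ← zpow_one_add₀ hn0]
    congr 2
    ring
  have hA' (j) (hj : j ∈ C.erase i) :
      abelPoly (fun i => (a i : ℚ)) (a i + a j) ((C.erase i).erase j) * treeConv (a i) (a j) =
        treeCoeff (a i) * (∑ j ∈ C, (a j : ℚ)) ^ (#C - 3 : ℤ) *
          ((a i + a j) * (treeConv (a i) (a j) / treeCoeff (a i))) := by
    have hc := (treeCoeff_pos (a i)).ne'
    rw [abelPoly_eq_zpow (fun i => (a i).cast_nonneg) (by positivity), add_assoc,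
      add_sum_erase _ (fun j => (a j : ℚ)) hj, hn, cast_card_erase_of_mem hj,
      cast_card_erase_of_mem hi, show (#C - 1 - 1 - 1 : ℤ) = #C - 3 by ring]
    field_simp
  rw [hn, hA, sum_congr rfl hA', ← mul_sum] at hcut
  rw [mul_left_comm, hcut, blockWeight, ← mul_prod_erase C _ hi, cycleWeight]
  field_simp

theorem sum_mul_join_pointedWeight (ha : ∀ i ∈ C, 0 < a i) {i j : ι} (hi : i ∈ C)
    (hj : j ∈ C.erase i) :
    (∑ i ∈ C, (a i : ℚ)) *
        (a i * (a j * pointedWeight a (a i + a j) ((C.erase i).erase j))) =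
      blockWeight a C * ((a i + a j) * (2 + treeConv (a i) (a j) / treeCoeff (a i) +
        treeConv (a j) (a i) / treeCoeff (a j))) := by
  have hn : ((a i + a j : ℕ) : ℚ) + ∑ l ∈ (C.erase i).erase j, (a l : ℚ) = ∑ l ∈ C, (a l : ℚ) := by
    rw [cast_add, add_assoc, add_sum_erase _ (fun j => (a j : ℚ)) hj,
      add_sum_erase _ (fun j => (a j : ℚ)) hi]
  have hn0 : ∑ j ∈ C, (a j : ℚ) ≠ 0 := (sum_pos (fun i hi => cast_pos.2 (ha i hi)) ⟨i, hi⟩).ne'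
  have hci := (treeCoeff_pos (a i)).ne'
  have hcj := (treeCoeff_pos (a j)).ne'
  rw [pointedWeight, blockWeight, hn, cast_card_erase_of_mem hj, cast_card_erase_of_mem hi,
    ← mul_prod_erase C _ hi, ← mul_prod_erase _ _ hj, cycleWeight, cycleWeight, cycleWeight,
    treeCoeff_add (ha i hi) (ha j (mem_of_mem_erase hj)),
    show (#C - 3 : ℤ) = #C - 1 - 1 - 2 + 1 by ring, zpow_add_one₀ hn0]
  push_cast
  field_simp

theorem sum_join_add_sum_cut (ha : ∀ i ∈ C, 0 < a i) (hC : C.Nonempty) :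
    ∑ i ∈ C, ∑ j ∈ C.erase i,
          (a i * (a j * pointedWeight a (a i + a j) ((C.erase i).erase j)) : ℚ) +
        ∑ i ∈ C, a i * ∑ d ∈ Ico 1 (a i), ∑ S ∈ (C.erase i).powerset,
          pointedWeight a d S * pointedWeight a (a i - d) (C.erase i \ S) =
      2 * (∑ i ∈ C, (a i : ℚ) + #C - 2) * blockWeight a C := by
  set n := ∑ i ∈ C, (a i : ℚ) with hn
  have hn0 : n ≠ 0 := (sum_pos (fun i hi => cast_pos.2 (ha i hi)) hC).ne'
  let x (i j : ι) : ℚ := (a i + a j) * (treeConv (a i) (a j) / treeCoeff (a i))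
  have hswap : ∑ i ∈ C, ∑ j ∈ C.erase i, x j i = ∑ i ∈ C, ∑ j ∈ C.erase i, x i j :=
    sum_comm' (by grind)
  have hfst : ∑ i ∈ C, ∑ _j ∈ C.erase i, (a i : ℚ) = (#C - 1) * n := by
    rw [hn, mul_sum]
    refine sum_congr rfl fun i hi => ?_
    rw [sum_const, card_erase_of_mem hi, nsmul_eq_mul, cast_pred (card_pos.2 hC)]
  have hsnd : ∑ i ∈ C, ∑ j ∈ C.erase i, (a j : ℚ) = (#C - 1) * n := by
    rw [← hfst]
    exact sum_comm' (by grind)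
  have hjoin (i) (hi : i ∈ C) (j) (hj : j ∈ C.erase i) :
      n * (a i * (a j * pointedWeight a (a i + a j) ((C.erase i).erase j))) =
        blockWeight a C * (2 * a i + 2 * a j + x i j + x j i) := by
    rw [sum_mul_join_pointedWeight ha hi hj]
    ring
  apply mul_left_cancel₀ hn0
  rw [mul_add, mul_sum, mul_sum, sum_congr rfl fun i hi => sum_mul_cut_pointedWeight ha hi]
  simp only [mul_sum]
  rw [sum_congr rfl fun i hi => sum_congr rfl (hjoin i hi)]
  simp only [← mul_sum, sum_add_distrib, sum_sub_distrib, hswap, hfst, hsnd]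
  rw [← hn, sum_const, nsmul_eq_mul]
  ring

end BlockWeight

section Blocks

variable {α : Type*}

/-- The finest equivalence relation coarser than `s` which relates `a` and `b`. -/
def merge (s : Setoid α) (a b : α) : Setoid α where
  r x y := s x y ∨ (s x a ∨ s x b) ∧ (s y a ∨ s y b)
  iseqv := by
    refine ⟨fun x => .inl (s.refl x), ?_, ?_⟩
    · rintro x y (h | ⟨hx, hy⟩)
      exacts [.inl (s.symm h), .inr ⟨hy, hx⟩]
    · have htrans {x y c} : s x y → s y c → s x c := s.trans
      have hsymm {x y} : s x y → s y x := s.symm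
      grind

theorem merge_rel {s : Setoid α} {a b x y : α} :
    merge s a b x y ↔ s x y ∨ (s x a ∨ s x b) ∧ (s y a ∨ s y b) := Iff.rfl

theorem le_merge (s : Setoid α) (a b : α) : s ≤ merge s a b := fun _ _ => .inl

theorem merge_rel_self (s : Setoid α) (a b : α) : merge s a b a b :=
  .inr ⟨.inl (s.refl a), .inr (s.refl b)⟩

theorem merge_le_iff {s t : Setoid α} {a b : α} : merge s a b ≤ t ↔ s ≤ t ∧ t a b := by
  refine ⟨fun h => ⟨(le_merge s a b).trans h, h (merge_rel_self s a b)⟩, ?_⟩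
  rintro ⟨hst, hab⟩ x y (h | ⟨hx, hy⟩)
  · exact hst h
  · have hend {z} (hz : s z a ∨ s z b) : t z a :=
      hz.elim (fun h => hst h) fun h => t.trans (hst h) (t.symm hab)
    exact t.trans (hend hx) (t.symm (hend hy))

theorem merge_eq_self {s : Setoid α} {a b : α} (h : s a b) : merge s a b = s :=
  le_antisymm (merge_le_iff.2 ⟨le_rfl, h⟩) (le_merge s a b)

/-- `IsCut s t a b` says that `s` is obtained from `t` by cutting one block into two, which contain
`a` and `b` respectively. -/
def IsCut (s t : Setoid α) (a b : α) : Prop := ¬s a b ∧ merge s a b = t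

theorem IsCut.le {s t : Setoid α} {a b : α} (h : IsCut s t a b) : s ≤ t := h.2 ▸ le_merge s a b

theorem IsCut.rel {s t : Setoid α} {a b : α} (h : IsCut s t a b) : t a b :=
  h.2 ▸ merge_rel_self s a b

theorem IsCut.rel_iff {s t : Setoid α} {a b x y : α} (h : IsCut s t a b) :
    t x y ↔ s x y ∨ (s x a ∨ s x b) ∧ (s y a ∨ s y b) := by
  rw [← h.2, merge_rel]

theorem inf_ker_rel {t : Setoid α} {U : Finset α} {x y : α} :
    (t ⊓ Setoid.ker (· ∈ U)) x y ↔ t x y ∧ (x ∈ U ↔ y ∈ U) :=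
  and_congr_right' eq_iff_iff

theorem isCut_inf_ker {t : Setoid α} {a b : α} {U : Finset α} (hab : t a b) (ha : a ∈ U)
    (hb : b ∉ U) (hU : ∀ x ∈ U, t a x) : IsCut (t ⊓ Setoid.ker (· ∈ U)) t a b := by
  refine ⟨fun h => hb ((inf_ker_rel.1 h).2.1 ha),
    le_antisymm (merge_le_iff.2 ⟨inf_le_left, hab⟩) fun x y hxy => ?_⟩
  have htrans {x y c} : t x y → t y c → t x c := t.trans
  have hsymm {x y} : t x y → t y x := t.symm
  simp only [merge_rel, inf_ker_rel]
  grind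

variable [Fintype α] [DecidableEq α] {s t π : Setoid α} {a b x y : α} {A B U : Finset α}

open scoped Classical in
/-- The set of equivalence classes of `s`. -/
noncomputable abbrev blocks (s : Setoid α) : Finset (Finset α) := (Finpartition.ofSetoid s).parts

open scoped Classical in
/-- The equivalence class of `x` under `s`. -/
noncomputable abbrev block (s : Setoid α) (x : α) : Finset α := (Finpartition.ofSetoid s).part x

/-- The equivalence classes of `s` contained in `B`. -/
noncomputable def blocksIn (s : Setoid α) (B : Finset α) : Finset (Finset α) :=
  {A ∈ blocks s | A ⊆ B}

theorem mem_block : y ∈ block s x ↔ s x y := by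
  classical exact Finpartition.mem_part_ofSetoid_iff_rel

theorem mem_block_self (s : Setoid α) (x : α) : x ∈ block s x := mem_block.2 (s.refl x)

theorem block_mem_blocks (s : Setoid α) (x : α) : block s x ∈ blocks s := by simp

theorem block_eq_of_mem (hA : A ∈ blocks s) (hx : x ∈ A) : block s x = A :=
  Finpartition.part_eq_of_mem _ hA hx

theorem block_eq_block_iff : block s x = block s y ↔ s x y := by
  rw [← mem_block]
  refine ⟨fun h => h ▸ mem_block_self s y, fun h => ?_⟩
  exact (block_eq_of_mem (block_mem_blocks s x) h).symm

theorem exists_block_eq (hA : A ∈ blocks s) : ∃ x, block s x = A := by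
  obtain ⟨x, hx⟩ := Finpartition.nonempty_of_mem_parts _ hA
  exact ⟨x, block_eq_of_mem hA hx⟩

theorem block_subset_block (h : s ≤ t) (x : α) : block s x ⊆ block t x := fun _ hy =>
  mem_block.2 (h (mem_block.1 hy))

theorem block_notMem_erase {T : Finset (Finset α)} (hT : T ⊆ blocks t) (h : t a x) :
    block s x ∉ T.erase (block t a) := by
  intro hmem
  obtain ⟨hne, hx⟩ := mem_erase.1 hmem
  exact hne (block_eq_of_mem (hT hx) (mem_block_self s x) ▸ block_eq_block_iff.2 (t.symm h))

theorem sum_card_blocks (s : Setoid α) : ∑ A ∈ blocks s, #A = Fintype.card α :=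
  Finpartition.sum_card_parts _

theorem blocks_eq_image (s : Setoid α) : blocks s = univ.image (block s) := by
  ext A
  rw [mem_image]
  refine ⟨fun hA => ?_, fun ⟨x, _, hx⟩ => hx ▸ block_mem_blocks s x⟩
  obtain ⟨x, hx⟩ := exists_block_eq hA
  exact ⟨x, mem_univ x, hx⟩

theorem card_blocks_eq_card_iff : #(blocks s) = Fintype.card α ↔ s = ⊥ := by
  rw [blocks_eq_image, ← card_univ, card_image_iff, coe_univ, Set.injOn_univ, eq_bot_iff]
  simp only [Function.Injective, block_eq_block_iff]
  exact ⟨fun h _ _ hxy => h hxy, fun h _ _ hxy => h hxy⟩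

theorem blocksIn_subset (s : Setoid α) (B : Finset α) : blocksIn s B ⊆ blocks s :=
  filter_subset _ _

/-- A set is saturated for `s` if it is a union of equivalence classes. -/
def IsSaturated (s : Setoid α) (U : Finset α) : Prop := ∀ ⦃x y⦄, s x y → x ∈ U → y ∈ U

theorem isSaturated_block (h : s ≤ π) (x : α) : IsSaturated s (block π x) := fun _ _ hyz hy =>
  mem_block.2 (π.trans (mem_block.1 hy) (h hyz))

theorem isSaturated_of_mem_blocks (h : s ≤ π) (hB : B ∈ blocks π) : IsSaturated s B := by
  obtain ⟨x, rfl⟩ := exists_block_eq hB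
  exact isSaturated_block h x

theorem IsSaturated.block_subset_iff (hU : IsSaturated s U) : block s x ⊆ U ↔ x ∈ U :=
  ⟨fun h => h (mem_block_self s x), fun hx _ hy => hU (mem_block.1 hy) hx⟩

theorem block_mem_blocksIn (h : s ≤ π) (x : α) : block s x ∈ blocksIn s (block π x) :=
  mem_filter.2 ⟨block_mem_blocks s x, block_subset_block h x⟩

theorem IsSaturated.biUnion_blocksIn (hU : IsSaturated s U) : (blocksIn s U).biUnion id = U := by
  ext x
  simp only [mem_biUnion, blocksIn, mem_filter, id]
  exact ⟨fun ⟨A, hA, hx⟩ => hA.2 hx,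
    fun hx => ⟨block s x, ⟨block_mem_blocks s x, hU.block_subset_iff.2 hx⟩, mem_block_self s x⟩⟩

theorem isSaturated_biUnion {T : Finset (Finset α)} (hT : T ⊆ blocks s) :
    IsSaturated s (T.biUnion id) := by
  intro x y hxy hx
  obtain ⟨A, hA, hxA⟩ := mem_biUnion.1 hx
  refine mem_biUnion.2 ⟨A, hA, ?_⟩
  rw [id, ← block_eq_of_mem (hT hA) hxA]
  exact mem_block.2 hxy

theorem blocksIn_biUnion {T : Finset (Finset α)} (hT : T ⊆ blocks s) :
    blocksIn s (T.biUnion id) = T := by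
  ext A
  rw [blocksIn, mem_filter]
  constructor
  · rintro ⟨hA, hAT⟩
    obtain ⟨x, rfl⟩ := exists_block_eq hA
    obtain ⟨A', hA', hx⟩ := mem_biUnion.1 (hAT (mem_block_self s x))
    rwa [block_eq_of_mem (hT hA') hx]
  · exact fun hA => ⟨hT hA, subset_biUnion_of_mem id hA⟩

theorem IsSaturated.blocksIn_sdiff (hU : IsSaturated s U) (B : Finset α) :
    blocksIn s (B \ U) = blocksIn s B \ blocksIn s U := by
  ext A
  simp only [blocksIn, mem_sdiff, mem_filter, subset_sdiff, not_and]
  refine ⟨fun ⟨hA, hAB, hAU⟩ => ⟨⟨hA, hAB⟩, fun _ h => ?_⟩,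
    fun ⟨⟨hA, hAB⟩, hAU⟩ => ⟨hA, hAB, disjoint_left.2 fun x hxA hxU => hAU hA ?_⟩⟩
  · exact (Finpartition.nonempty_of_mem_parts _ hA).ne_empty (disjoint_self.1 (hAU.mono_right h))
  · rwa [← block_eq_of_mem hA hxA, hU.block_subset_iff]

theorem sum_blocksIn (h : s ≤ π) {M : Type*} [AddCommMonoid M] (F : Finset α → M) :
    ∑ B ∈ blocks π, ∑ A ∈ blocksIn s B, F A = ∑ A ∈ blocks s, F A := by
  refine (sum_biUnion ?_).symm.trans (sum_congr ?_ fun _ _ => rfl)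
  · intro B hB B' hB' hne
    refine disjoint_left.2 fun A hA hA' => hne ?_
    obtain ⟨x, rfl⟩ := exists_block_eq (mem_filter.1 hA).1
    rw [← block_eq_of_mem hB ((mem_filter.1 hA).2 (mem_block_self s x)),
      block_eq_of_mem hB' ((mem_filter.1 hA').2 (mem_block_self s x))]
  · ext A
    rw [mem_biUnion]
    refine ⟨fun ⟨B, _, hA⟩ => (mem_filter.1 hA).1, fun hA => ?_⟩
    obtain ⟨x, rfl⟩ := exists_block_eq hA
    exact ⟨block π x, block_mem_blocks π x, block_mem_blocksIn h x⟩

theorem pairwiseDisjoint_blocks (s : Setoid α) : (blocks s : Set (Finset α)).PairwiseDisjoint id :=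
  (Finpartition.supIndep _).pairwiseDisjoint

theorem IsSaturated.sum_block (hU : IsSaturated s U) {R : Type*} [Semiring R]
    (F : Finset α → R) : ∑ x ∈ U, F (block s x) = ∑ A ∈ blocksIn s U, #A * F A := by
  conv_lhs => rw [← hU.biUnion_blocksIn]
  rw [sum_biUnion ((pairwiseDisjoint_blocks s).subset (blocksIn_subset s U))]
  refine sum_congr rfl fun A hA => ?_
  rw [id, sum_congr rfl fun x hx => by rw [block_eq_of_mem (blocksIn_subset s U hA) hx], sum_const,
    nsmul_eq_mul]

theorem sum_block_block (h : s ≤ π) {R : Type*} [Semiring R] (F : Finset α → Finset α → R) :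
    ∑ x, F (block π x) (block s x) = ∑ B ∈ blocks π, ∑ A ∈ blocksIn s B, #A * F B A := by
  classical
  rw [← Finpartition.biUnion_parts (Finpartition.ofSetoid π),
    sum_biUnion (pairwiseDisjoint_blocks π)]
  refine sum_congr rfl fun B hB => ?_
  rw [id, ← (isSaturated_of_mem_blocks h hB).sum_block]
  exact sum_congr rfl fun x hx => by rw [block_eq_of_mem hB hx]

theorem blocksIn_block_self (s : Setoid α) (a : α) : blocksIn s (block s a) = {block s a} := by
  ext A
  rw [mem_singleton, blocksIn, mem_filter]
  constructor
  · rintro ⟨hA, hAa⟩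
    obtain ⟨x, rfl⟩ := exists_block_eq hA
    exact (block_eq_block_iff.2 (mem_block.1 (hAa (mem_block_self s x)))).symm
  · rintro rfl
    exact ⟨block_mem_blocks s a, subset_rfl⟩

theorem sum_block_sdiff_block (h : s ≤ π) (a : α) {R : Type*} [Semiring R] (F : Finset α → R) :
    ∑ b ∈ block π a \ block s a, F (block s b) =
      ∑ A ∈ (blocksIn s (block π a)).erase (block s a), #A * F A := by
  have hsat : IsSaturated s (block π a \ block s a) := fun x y hxy hx => by
    rw [mem_sdiff, mem_block, mem_block] at hx ⊢
    exact ⟨π.trans hx.1 (h hxy), fun hy => hx.2 (s.trans hy (s.symm hxy))⟩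
  rw [hsat.sum_block, (isSaturated_block le_rfl a).blocksIn_sdiff, blocksIn_block_self, erase_eq]

theorem card_blocks_le (h : s ≤ π) : #(blocks π) ≤ #(blocks s) := by
  rw [card_eq_sum_ones (blocks s), ← sum_blocksIn h, card_eq_sum_ones]
  refine sum_le_sum fun B hB => ?_
  obtain ⟨x, rfl⟩ := exists_block_eq hB
  rw [← card_eq_sum_ones]
  exact card_pos.2 ⟨_, block_mem_blocksIn h x⟩

namespace IsCut

theorem block_eq_union (h : IsCut s t a b) : block t a = block s a ∪ block s b := by
  ext y
  rw [mem_union, mem_block, mem_block, mem_block, h.rel_iff, s.comm' (x := a) (y := y),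
    s.comm' (x := b) (y := y)]
  simp

theorem disjoint_block (h : IsCut s t a b) : Disjoint (block s a) (block s b) :=
  disjoint_left.2 fun _ hxa hxb => h.1 (s.trans (mem_block.1 hxa) (s.symm (mem_block.1 hxb)))

theorem card_block (h : IsCut s t a b) : #(block t a) = #(block s a) + #(block s b) := by
  rw [h.block_eq_union, card_union_of_disjoint h.disjoint_block]

theorem block_eq_block (h : IsCut s t a b) (hx : ¬t a x) : block s x = block t x := by
  ext y
  rw [mem_block, mem_block, h.rel_iff, or_iff_left]
  rintro ⟨hxa | hxb, -⟩
  · exact hx (t.symm (h.le hxa))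
  · exact hx (t.trans h.rel (t.symm (h.le hxb)))

theorem blocks_eq (h : IsCut s t a b) :
    blocks s = insert (block s a) (insert (block s b) ((blocks t).erase (block t a))) := by
  ext A
  simp only [mem_insert, mem_erase]
  constructor
  · intro hA
    obtain ⟨x, rfl⟩ := exists_block_eq hA
    rw [block_eq_block_iff, block_eq_block_iff]
    by_cases hx : t a x
    · have hx' := mem_block.2 hx
      rw [h.block_eq_union, mem_union, mem_block, mem_block, s.comm' (x := a),
        s.comm' (x := b)] at hx'
      tauto
    · rw [h.block_eq_block hx, ne_eq, block_eq_block_iff, t.comm' (x := x)]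
      exact .inr (.inr ⟨hx, block_mem_blocks t x⟩)
  · rintro (rfl | rfl | ⟨hne, hA⟩)
    · exact block_mem_blocks s a
    · exact block_mem_blocks s b
    · obtain ⟨x, rfl⟩ := exists_block_eq hA
      rw [ne_eq, block_eq_block_iff, t.comm' (x := x)] at hne
      exact h.block_eq_block hne ▸ block_mem_blocks s x

theorem block_notMem_insert (h : IsCut s t a b) {T : Finset (Finset α)} (hT : T ⊆ blocks t) :
    block s a ∉ insert (block s b) (T.erase (block t a)) := by
  rw [mem_insert, not_or, block_eq_block_iff]
  exact ⟨h.1, block_notMem_erase hT (t.refl a)⟩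

theorem card_blocks (h : IsCut s t a b) : #(blocks s) = #(blocks t) + 1 := by
  rw [h.blocks_eq, card_insert_of_notMem (h.block_notMem_insert subset_rfl),
    card_insert_of_notMem (block_notMem_erase subset_rfl h.rel),
    card_erase_add_one (block_mem_blocks t a)]

theorem blocksIn_block (h : IsCut s t a b) (hπ : t ≤ π) : blocksIn s (block π a) =
    insert (block s a) (insert (block s b) ((blocksIn t (block π a)).erase (block t a))) := by
  have ha := block_subset_block (h.le.trans hπ) a
  have hb := block_subset_block (h.le.trans hπ) b
  rw [← block_eq_block_iff.2 (hπ h.rel)] at hb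
  rw [blocksIn, h.blocks_eq, filter_insert, if_pos ha, filter_insert, if_pos hb, filter_erase,
    blocksIn]

theorem blocksIn_of_ne (h : IsCut s t a b) (hπ : t ≤ π) (hB : B ∈ blocks π) (hne : B ≠ block π a) :
    blocksIn s B = blocksIn t B := by
  have hsat := isSaturated_of_mem_blocks (h.le.trans hπ) hB
  have hsat' := isSaturated_of_mem_blocks hπ hB
  have haB : a ∉ B := fun ha => hne (block_eq_of_mem hB ha).symm
  have hbB : b ∉ B := fun hb => hne <| by
    rw [← block_eq_of_mem hB hb, block_eq_block_iff]
    exact π.symm (hπ h.rel)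
  rw [blocksIn, h.blocks_eq, filter_insert, if_neg (by rwa [hsat.block_subset_iff]),
    filter_insert, if_neg (by rwa [hsat.block_subset_iff]), filter_erase, blocksIn,
    erase_eq_of_notMem]
  simp [hsat'.block_subset_iff, haB]

end IsCut

end Blocks

section PartitionWeight

noncomputable instance {α : Type*} [Finite α] : Fintype (Setoid α) :=
  @Fintype.ofFinite _ (Finite.of_injective (fun s : Setoid α => (s : α → α → Prop)) fun _ _ h =>
    Setoid.ext fun x y => iff_of_eq (congrFun₂ h x y))

variable {α : Type*} [Fintype α] [DecidableEq α] {s t π ϖ : Setoid α} {a b : α}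

/-- The product of the Hurwitz weights of the blocks of `π`, each made of cycles of lengths given
by the blocks of `s` it contains. -/
noncomputable def partitionWeight (s π : Setoid α) : ℚ :=
  ∏ B ∈ blocks π, blockWeight card (blocksIn s B)

theorem IsCut.partitionWeight_join (h : IsCut s t a b) (hπ : t ≤ π) :
    partitionWeight t π =
      pointedWeight card (#(block s a) + #(block s b))
          (((blocksIn s (block π a)).erase (block s a)).erase (block s b)) *
        ∏ B ∈ (blocks π).erase (block π a), blockWeight card (blocksIn s B) := by
  have hrest : (blocksIn t (block π a)).erase (block t a) =
      ((blocksIn s (block π a)).erase (block s a)).erase (block s b) := by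
    rw [h.blocksIn_block hπ, erase_insert, erase_insert]
    · exact block_notMem_erase (blocksIn_subset t _) h.rel
    · exact h.block_notMem_insert (blocksIn_subset t _)
  rw [partitionWeight, ← mul_prod_erase _ _ (block_mem_blocks π a),
    blockWeight_eq_pointedWeight (block_mem_blocksIn hπ a), h.card_block, hrest]
  congr 1
  refine prod_congr rfl fun B hB => ?_
  rw [h.blocksIn_of_ne hπ (mem_erase.1 hB).2 (mem_erase.1 hB).1]

theorem block_inf_ker {U : Finset α} (ha : a ∈ U) (hU : ∀ x ∈ U, π a x) :
    block (π ⊓ Setoid.ker (· ∈ U)) a = U := by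
  ext x
  rw [mem_block]
  refine inf_ker_rel.trans ⟨fun h => h.2.1 ha, fun hx => ⟨hU x hx, by simp [ha, hx]⟩⟩

namespace IsCut

theorem eq_inf_ker (h : IsCut ϖ π a b) : ϖ = π ⊓ Setoid.ker (· ∈ block ϖ a) := by
  ext x y
  refine Iff.trans ?_ inf_ker_rel.symm
  rw [h.rel_iff, mem_block, mem_block]
  have htrans {x y c} : ϖ x y → ϖ y c → ϖ x c := ϖ.trans
  have hsymm {x y} : ϖ x y → ϖ y x := ϖ.symm
  have := h.1
  grind

theorem block_eq_sdiff (h : IsCut ϖ π a b) : block ϖ b = block π a \ block ϖ a := by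
  rw [h.block_eq_union, union_sdiff_cancel_left h.disjoint_block]

theorem partitionWeight_cut (h : IsCut s t a b) (hϖ : IsCut ϖ π a b) (ht : t ≤ π) :
    partitionWeight s ϖ =
      blockWeight card (blocksIn s (block ϖ a)) * blockWeight card (blocksIn s (block ϖ b)) *
        ∏ B ∈ (blocks π).erase (block π a), blockWeight card (blocksIn t B) := by
  rw [partitionWeight, hϖ.blocks_eq, prod_insert (hϖ.block_notMem_insert subset_rfl),
    prod_insert (block_notMem_erase subset_rfl hϖ.rel), mul_assoc]
  congr 2
  refine prod_congr rfl fun B hB => ?_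
  rw [h.blocksIn_of_ne ht (mem_erase.1 hB).2 (mem_erase.1 hB).1]

theorem exists_blocksIn_eq_insert (h : IsCut s t a b) (hπ : t ≤ π) {S : Finset (Finset α)}
    (hS : S ⊆ (blocksIn t (block π a)).erase (block t a)) :
    ∃ ϖ, s ≤ ϖ ∧ IsCut ϖ π a b ∧ blocksIn s (block ϖ a) = insert (block s a) S := by
  have hsub : insert (block s a) S ⊆ blocksIn s (block π a) := by
    rw [h.blocksIn_block hπ]
    exact insert_subset_insert _ (hS.trans (subset_insert _ _))
  have hblocks := hsub.trans (blocksIn_subset s _)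
  have hsat := isSaturated_biUnion hblocks
  have hrel (x) (hx : x ∈ (insert (block s a) S).biUnion id) : π a x := by
    obtain ⟨A, hA, hxA⟩ := mem_biUnion.1 hx
    exact mem_block.1 ((mem_filter.1 (hsub hA)).2 hxA)
  have ha : a ∈ (insert (block s a) S).biUnion id :=
    mem_biUnion.2 ⟨_, mem_insert_self _ _, mem_block_self s a⟩
  have hb : b ∉ (insert (block s a) S).biUnion id := by
    intro hb
    have hbS : block s b ∈ blocksIn s ((insert (block s a) S).biUnion id) :=
      mem_filter.2 ⟨block_mem_blocks s b, hsat.block_subset_iff.2 hb⟩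
    rw [blocksIn_biUnion hblocks] at hbS
    obtain hba | hbS := mem_insert.1 hbS
    · exact h.1 (s.symm (block_eq_block_iff.1 hba))
    · exact block_notMem_erase (blocksIn_subset t _) h.rel (hS hbS)
  refine ⟨_, fun x y hxy => inf_ker_rel.2 ⟨hπ (h.le hxy), hsat hxy, hsat (s.symm hxy)⟩,
    isCut_inf_ker (hπ h.rel) ha hb hrel, ?_⟩
  rw [block_inf_ker ha hrel, blocksIn_biUnion hblocks]

theorem erase_blocksIn_subset (h : IsCut s t a b) (hπ : t ≤ π) (hϖ : IsCut ϖ π a b) :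
    (blocksIn s (block ϖ a)).erase (block s a) ⊆ (blocksIn t (block π a)).erase (block t a) := by
  intro A hA
  obtain ⟨hne, hA⟩ := mem_erase.1 hA
  have hAπ : A ∈ blocksIn s (block π a) :=
    monotone_filter_right _ (fun _ _ h => h.trans (block_subset_block hϖ.le a)) hA
  rw [h.blocksIn_block hπ, mem_insert, mem_insert] at hAπ
  obtain hAa | rfl | hA' := hAπ
  · exact absurd hAa hne
  · exact absurd (mem_block.1 ((mem_filter.1 hA).2 (mem_block_self s b))) hϖ.1
  · exact hA'

theorem blocksIn_block_right (h : IsCut s t a b) (hπ : t ≤ π) (hs : s ≤ ϖ) (hϖ : IsCut ϖ π a b) :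
    blocksIn s (block ϖ b) = insert (block s b) ((blocksIn t (block π a)).erase (block t a) \
      (blocksIn s (block ϖ a)).erase (block s a)) := by
  rw [hϖ.block_eq_sdiff, (isSaturated_block hs a).blocksIn_sdiff, h.blocksIn_block hπ]
  have hb := h.block_notMem_insert (blocksIn_subset t (block π a))
  have := h.erase_blocksIn_subset hπ hϖ
  have ha := block_mem_blocksIn hs a
  have hbϖ : block s b ∉ blocksIn s (block ϖ a) := fun hmem =>
    hϖ.1 (mem_block.1 ((mem_filter.1 hmem).2 (mem_block_self s b)))
  grind

open scoped Classical in
theorem sum_partitionWeight_cut (h : IsCut s t a b) (hπ : t ≤ π) :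
    ∑ ϖ with s ≤ ϖ ∧ IsCut ϖ π a b, partitionWeight s ϖ =
      (∑ S ∈ ((blocksIn t (block π a)).erase (block t a)).powerset,
        pointedWeight card #(block s a) S * pointedWeight card (#(block t a) - #(block s a))
          ((blocksIn t (block π a)).erase (block t a) \ S)) *
        ∏ B ∈ (blocks π).erase (block π a), blockWeight card (blocksIn t B) := by
  rw [sum_mul]
  refine sum_nbij (fun ϖ => (blocksIn s (block ϖ a)).erase (block s a)) ?_ ?_ ?_ ?_
  · intro ϖ hϖ
    obtain ⟨-, hϖ⟩ := (mem_filter.1 hϖ).2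
    exact mem_powerset.2 (h.erase_blocksIn_subset hπ hϖ)
  · intro ϖ hϖ ϖ' hϖ' heq
    obtain ⟨hs, hϖ⟩ := (mem_filter.1 hϖ).2
    obtain ⟨hs', hϖ'⟩ := (mem_filter.1 hϖ').2
    have hblocksIn : blocksIn s (block ϖ a) = blocksIn s (block ϖ' a) := by
      rw [← insert_erase (block_mem_blocksIn hs a), ← insert_erase (block_mem_blocksIn hs' a)]
      exact congrArg _ heq
    rw [hϖ.eq_inf_ker, hϖ'.eq_inf_ker, ← (isSaturated_block hs a).biUnion_blocksIn, hblocksIn,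
      (isSaturated_block hs' a).biUnion_blocksIn]
  · intro S hS
    obtain ⟨ϖ, hs, hϖ, hblocksIn⟩ := h.exists_blocksIn_eq_insert hπ (mem_powerset.1 hS)
    refine ⟨ϖ, mem_filter.2 ⟨mem_univ ϖ, hs, hϖ⟩, ?_⟩
    have ha : block s a ∉ S := fun ha =>
      block_notMem_erase (blocksIn_subset t _) (t.refl a) (mem_powerset.1 hS ha)
    simp only [hblocksIn, erase_insert ha]
  · intro ϖ hϖ
    obtain ⟨hs, hϖ⟩ := (mem_filter.1 hϖ).2
    have hb : block s b ∉ (blocksIn t (block π a)).erase (block t a) :=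
      block_notMem_erase (blocksIn_subset t _) h.rel
    rw [h.partitionWeight_cut hϖ hπ, blockWeight_eq_pointedWeight (block_mem_blocksIn hs a),
      h.blocksIn_block_right hπ hs hϖ, blockWeight_insert _ fun hmem => hb (mem_sdiff.1 hmem).1,
      h.card_block, Nat.add_sub_cancel_left]

end IsCut

end PartitionWeight

section Cycles

open Function Equiv Equiv.Perm

variable {α : Type*}

theorem setoid_le_iff [Finite α] {σ : Perm α} {t : Setoid α} :
    SameCycle.setoid σ ≤ t ↔ ∀ x, t x (σ x) := by
  refine ⟨fun h x => h (sameCycle_apply_right.2 (SameCycle.refl σ x)), fun h x y hxy => ?_⟩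
  obtain ⟨n, rfl⟩ := SameCycle.exists_nat_pow_eq hxy
  induction n with
  | zero => exact t.refl x
  | succ n ih =>
    rw [pow_succ', mul_apply]
    exact t.trans (ih (sameCycle_pow_right.2 (SameCycle.refl σ x))) (h _)

theorem setoid_eq_bot_iff [Finite α] {σ : Perm α} : SameCycle.setoid σ = ⊥ ↔ σ = 1 := by
  rw [eq_bot_iff, setoid_le_iff, Perm.ext_iff]
  exact forall_congr' fun x => eq_comm

variable {σ : Perm α} {a b : α} {d : ℕ}

theorem sameCycle_iterate (σ : Perm α) (a : α) (j : ℕ) : SameCycle σ a (σ^[j] a) := by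
  rw [iterate_eq_pow]
  exact sameCycle_pow_right.2 (SameCycle.refl σ a)

theorem iterate_ne_self_of_lt_minimalPeriod {j : ℕ} (hj : 0 < j) (hjd : j < minimalPeriod σ a) :
    σ^[j] a ≠ a :=
  not_isPeriodicPt_of_pos_of_lt_minimalPeriod hj.ne' hjd

theorem iterate_ne_of_lt_minimalPeriod (hd : d < minimalPeriod σ a) {j : ℕ}
    (hj : 0 < j) (hjd : j < d) : σ^[j] a ≠ a ∧ σ^[j] a ≠ σ^[d] a :=
  ⟨iterate_ne_self_of_lt_minimalPeriod hj (hjd.trans hd), fun h => hjd.ne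
    ((iterate_eq_iterate_iff_of_lt_minimalPeriod (hjd.trans hd) hd).1 h)⟩

theorem minimalPeriod_pos [Finite α] (σ : Perm α) (a : α) : 0 < minimalPeriod σ a :=
  minimalPeriod_pos_of_mem_periodicPts (σ.injective.mem_periodicPts a)

variable [DecidableEq α]

theorem setoid_swap_le_iff [Finite α] {t : Setoid α} : SameCycle.setoid (swap a b) ≤ t ↔ t a b := by
  rw [setoid_le_iff]
  refine ⟨fun h => by simpa using h a, fun h x => ?_⟩
  obtain rfl | hxa := eq_or_ne x a
  · rwa [swap_apply_left]
  · obtain rfl | hxb := eq_or_ne x b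
    · rw [swap_apply_right]
      exact t.symm h
    · rw [swap_apply_of_ne_of_ne hxa hxb]

theorem sup_setoid_swap [Finite α] (s : Setoid α) (a b : α) :
    s ⊔ SameCycle.setoid (swap a b) = merge s a b :=
  eq_of_forall_ge_iff fun t => by rw [sup_le_iff, setoid_swap_le_iff, merge_le_iff]

theorem merge_setoid_swap_mul [Finite α] (σ : Perm α) (a b : α) :
    merge (SameCycle.setoid (swap a b * σ)) a b = merge (SameCycle.setoid σ) a b := by
  have hle (σ : Perm α) : merge (SameCycle.setoid (swap a b * σ)) a b ≤
      merge (SameCycle.setoid σ) a b := by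
    refine merge_le_iff.2 ⟨setoid_le_iff.2 fun x => ?_, merge_rel_self _ a b⟩
    rw [← sup_setoid_swap]
    exact Setoid.trans' _ (setoid_le_iff.1 le_sup_left x) (setoid_le_iff.1 le_sup_right (σ x))
  refine (hle σ).antisymm ?_
  have h := hle (swap a b * σ)
  rwa [swap_mul_self_mul] at h

theorem iterate_swap_mul (hd : ∀ j, 0 < j → j < d → σ^[j] a ≠ a ∧ σ^[j] a ≠ b) {j : ℕ}
    (hj : j < d) : (swap a b * σ)^[j] a = σ^[j] a := by
  induction j with
  | zero => rfl
  | succ j ih =>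
    obtain ⟨hja, hjb⟩ := hd (j + 1) j.succ_pos hj
    rw [iterate_succ_apply', ih (by omega), mul_apply, ← iterate_succ_apply' σ,
      swap_apply_of_ne_of_ne hja hjb]

theorem iterate_swap_mul_self (hd : ∀ j, 0 < j → j < d → σ^[j] a ≠ a ∧ σ^[j] a ≠ b)
    (hd0 : 0 < d) : (swap a b * σ)^[d] a = swap a b (σ^[d] a) := by
  obtain ⟨d, rfl⟩ := Nat.exists_eq_add_one.2 hd0
  rw [iterate_succ_apply', iterate_swap_mul hd d.lt_succ_self, mul_apply, iterate_succ_apply']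

theorem block_setoid [Fintype α] (σ : Perm α) (a : α) :
    block (SameCycle.setoid σ) a = (range (minimalPeriod σ a)).image (σ^[·] a) := by
  ext x
  rw [mem_block, mem_image]
  constructor
  · intro h
    obtain ⟨n, rfl⟩ := SameCycle.exists_nat_pow_eq h
    refine ⟨n % minimalPeriod σ a, mem_range.2 (Nat.mod_lt _ (minimalPeriod_pos σ a)), ?_⟩
    rw [iterate_mod_minimalPeriod_eq, iterate_eq_pow]
  · rintro ⟨j, -, rfl⟩
    exact sameCycle_iterate σ a j

theorem card_block_setoid [Fintype α] (σ : Perm α) (a : α) :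
    #(block (SameCycle.setoid σ) a) = minimalPeriod σ a := by
  rw [block_setoid, card_image_of_injOn, card_range]
  exact iterate_injOn_Iio_minimalPeriod.mono fun j hj => mem_range.1 hj

theorem isCut_swap_mul_of_not_sameCycle [Finite α] (h : ¬SameCycle σ a b) :
    IsCut (SameCycle.setoid σ) (SameCycle.setoid (swap a b * σ)) a b := by
  refine ⟨h, ?_⟩
  have hiter := iterate_swap_mul_self (b := b) (d := minimalPeriod σ a)
    (fun j hj hjd => ⟨iterate_ne_self_of_lt_minimalPeriod hj hjd,
      fun hjb => h (hjb ▸ sameCycle_iterate σ a j)⟩) (minimalPeriod_pos σ a)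
  rw [iterate_minimalPeriod, swap_apply_left] at hiter
  rw [← merge_setoid_swap_mul, merge_eq_self]
  have := sameCycle_iterate (swap a b * σ) a (minimalPeriod σ a)
  rwa [hiter] at this

theorem minimalPeriod_swap_mul [Finite α] (hd0 : 0 < d) (hd : d < minimalPeriod σ a) :
    minimalPeriod (swap a (σ^[d] a) * σ) a = d := by
  have hne (j) := iterate_ne_of_lt_minimalPeriod (j := j) hd
  have hper : IsPeriodicPt (swap a (σ^[d] a) * σ) d a := by
    rw [IsPeriodicPt, IsFixedPt, iterate_swap_mul_self hne hd0, swap_apply_right]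
  refine (hper.minimalPeriod_le hd0).antisymm (not_lt.1 fun hlt => ?_)
  have h := iterate_minimalPeriod (f := (swap a (σ^[d] a) * σ)) (x := a)
  rw [iterate_swap_mul hne hlt] at h
  exact (hne _ (minimalPeriod_pos _ a) hlt).1 h

theorem isCut_swap_mul [Finite α] (hd0 : 0 < d) (hd : d < minimalPeriod σ a) :
    IsCut (SameCycle.setoid (swap a (σ^[d] a) * σ)) (SameCycle.setoid σ) a (σ^[d] a) := by
  have := Fintype.ofFinite α
  refine ⟨fun h => ?_, ?_⟩
  · obtain ⟨j, hj, hjd⟩ := mem_image.1 (block_setoid (swap a (σ^[d] a) * σ) a ▸ mem_block.2 h)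
    rw [minimalPeriod_swap_mul hd0 hd, mem_range] at hj
    simp only [iterate_swap_mul (fun _ => iterate_ne_of_lt_minimalPeriod hd) hj] at hjd
    exact hj.ne ((iterate_eq_iterate_iff_of_lt_minimalPeriod (hj.trans hd) hd).1 hjd)
  · rw [merge_setoid_swap_mul, merge_eq_self (sameCycle_iterate σ a d)]

theorem block_erase_setoid [Fintype α] (σ : Perm α) (a : α) :
    (block (SameCycle.setoid σ) a).erase a = (Ico 1 (minimalPeriod σ a)).image (σ^[·] a) := by
  ext x
  rw [block_setoid, mem_erase, mem_image, mem_image]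
  constructor
  · rintro ⟨hne, j, hj, rfl⟩
    refine ⟨j, mem_Ico.2 ⟨Nat.one_le_iff_ne_zero.2 ?_, mem_range.1 hj⟩, rfl⟩
    rintro rfl
    exact hne rfl
  · rintro ⟨j, hj, rfl⟩
    rw [mem_Ico] at hj
    exact ⟨iterate_ne_self_of_lt_minimalPeriod hj.1 hj.2, j, mem_range.2 hj.2, rfl⟩

theorem isCut_swap_mul_of_sameCycle [Finite α] (hne : a ≠ b) (h : SameCycle σ a b) :
    IsCut (SameCycle.setoid (swap a b * σ)) (SameCycle.setoid σ) a b := by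
  have := Fintype.ofFinite α
  have hb : b ∈ (block (SameCycle.setoid σ) a).erase a := mem_erase.2 ⟨hne.symm, mem_block.2 h⟩
  rw [block_erase_setoid] at hb
  obtain ⟨d, hd, rfl⟩ := mem_image.1 hb
  exact isCut_swap_mul (mem_Ico.1 hd).1 (mem_Ico.1 hd).2

theorem sum_card_block_swap_mul [Fintype α] (σ : Perm α) (a : α) {M : Type*}
    [AddCommMonoid M] (F : ℕ → M) :
    ∑ b ∈ (block (SameCycle.setoid σ) a).erase a, F #(block (SameCycle.setoid (swap a b * σ)) a) =
      ∑ d ∈ Ico 1 #(block (SameCycle.setoid σ) a), F d := by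
  rw [block_erase_setoid, sum_image, card_block_setoid]
  · refine sum_congr rfl fun d hd => ?_
    rw [card_block_setoid, minimalPeriod_swap_mul (mem_Ico.1 hd).1 (mem_Ico.1 hd).2]
  · exact iterate_injOn_Iio_minimalPeriod.mono fun j hj => (mem_Ico.1 hj).2

end Cycles

section WeightRecursion

open Function Equiv Equiv.Perm

theorem sum_partitionWeight_swap_mul_of_not_sameCycle {α : Type*} [Fintype α] [DecidableEq α]
    {σ : Perm α} {π : Setoid α} (hσ : SameCycle.setoid σ ≤ π) (a : α) :
    ∑ b ∈ block π a \ block (SameCycle.setoid σ) a,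
        partitionWeight (SameCycle.setoid (swap a b * σ)) π =
      (∑ A ∈ (blocksIn (SameCycle.setoid σ) (block π a)).erase (block (SameCycle.setoid σ) a),
        #A * pointedWeight card (#(block (SameCycle.setoid σ) a) + #A)
          (((blocksIn (SameCycle.setoid σ) (block π a)).erase
            (block (SameCycle.setoid σ) a)).erase A)) *
        ∏ B ∈ (blocks π).erase (block π a),
          blockWeight card (blocksIn (SameCycle.setoid σ) B) := by
  rw [← sum_block_sdiff_block hσ, sum_mul]
  refine sum_congr rfl fun b hb => ?_
  rw [mem_sdiff, mem_block, mem_block] at hb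
  refine (isCut_swap_mul_of_not_sameCycle hb.2).partitionWeight_join ?_
  rw [← (isCut_swap_mul_of_not_sameCycle hb.2).2]
  exact merge_le_iff.2 ⟨hσ, hb.1⟩

open scoped Classical in
theorem sum_partitionWeight_swap_mul_of_sameCycle {α : Type*} [Fintype α] [DecidableEq α]
    {σ : Perm α} {π : Setoid α} (hσ : SameCycle.setoid σ ≤ π) (a : α) :
    ∑ b ∈ (block (SameCycle.setoid σ) a).erase a,
        ∑ ϖ with SameCycle.setoid (swap a b * σ) ≤ ϖ ∧ IsCut ϖ π a b,
          partitionWeight (SameCycle.setoid (swap a b * σ)) ϖ =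
      (∑ d ∈ Ico 1 #(block (SameCycle.setoid σ) a),
        ∑ S ∈ ((blocksIn (SameCycle.setoid σ) (block π a)).erase
            (block (SameCycle.setoid σ) a)).powerset,
          pointedWeight card d S * pointedWeight card (#(block (SameCycle.setoid σ) a) - d)
            ((blocksIn (SameCycle.setoid σ) (block π a)).erase
              (block (SameCycle.setoid σ) a) \ S)) *
        ∏ B ∈ (blocks π).erase (block π a),
          blockWeight card (blocksIn (SameCycle.setoid σ) B) := by
  rw [← sum_card_block_swap_mul σ a, sum_mul]
  refine sum_congr rfl fun b hb => ?_
  have hb := mem_erase.1 hb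
  exact (isCut_swap_mul_of_sameCycle hb.1.symm (mem_block.1 hb.2)).sum_partitionWeight_cut hσ

open scoped Classical in
theorem sum_partitionWeight_swap_mul {α : Type*} [Fintype α] [DecidableEq α]
    {σ : Perm α} {π : Setoid α} (hσ : SameCycle.setoid σ ≤ π) :
    ∑ a, (∑ b ∈ block π a \ block (SameCycle.setoid σ) a,
          partitionWeight (SameCycle.setoid (swap a b * σ)) π +
        ∑ b ∈ (block (SameCycle.setoid σ) a).erase a,
          ∑ ϖ with SameCycle.setoid (swap a b * σ) ≤ ϖ ∧ IsCut ϖ π a b,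
            partitionWeight (SameCycle.setoid (swap a b * σ)) ϖ) =
      2 * (Fintype.card α + #(blocks (SameCycle.setoid σ)) - 2 * #(blocks π)) *
        partitionWeight (SameCycle.setoid σ) π := by
  simp only [sum_partitionWeight_swap_mul_of_not_sameCycle hσ,
    sum_partitionWeight_swap_mul_of_sameCycle hσ, ← add_mul]
  generalize SameCycle.setoid σ = s at hσ ⊢
  rw [sum_block_block hσ fun B A => (∑ A' ∈ (blocksIn s B).erase A, (#A' * pointedWeight card
    (#A + #A') (((blocksIn s B).erase A).erase A') : ℚ) + ∑ d ∈ Ico 1 #A, ∑ S ∈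
    ((blocksIn s B).erase A).powerset, pointedWeight card d S * pointedWeight card (#A - d)
    ((blocksIn s B).erase A \ S)) * ∏ B' ∈ (blocks π).erase B, blockWeight card (blocksIn s B')]
  have hblock (B) (hB : B ∈ blocks π) : _ = _ :=
    sum_join_add_sum_cut (C := blocksIn s B) (a := card) (fun A hA => card_pos.2
      (Finpartition.nonempty_of_mem_parts _ (blocksIn_subset s B hA))) (by
        obtain ⟨x, rfl⟩ := exists_block_eq hB
        exact ⟨_, block_mem_blocksIn hσ x⟩)
  have hcard : ∑ B ∈ blocks π, (∑ A ∈ blocksIn s B, (#A : ℚ) + #(blocksIn s B) - 2) =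
      Fintype.card α + #(blocks s) - 2 * #(blocks π) := by
    have hlen : ∑ B ∈ blocks π, (#(blocksIn s B) : ℚ) = #(blocks s) := by
      simpa using sum_blocksIn hσ fun _ => (1 : ℚ)
    rw [sum_sub_distrib, sum_add_distrib, sum_blocksIn hσ, hlen, ← Nat.cast_sum, sum_card_blocks,
      sum_const, nsmul_eq_mul, mul_comm 2]
  rw [← hcard, mul_sum, sum_mul]
  refine sum_congr rfl fun B hB => ?_
  rw [partitionWeight, ← mul_prod_erase _ _ hB, ← mul_assoc, ← hblock B hB, ← sum_add_distrib,
    sum_mul]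
  refine sum_congr rfl fun A _ => ?_
  rw [← mul_sum]
  ring

end WeightRecursion

section Factorizations

open Function Equiv Equiv.Perm
open scoped Nat

theorem iSup_setoid_cons {α : Type*} {r : ℕ} (τ₀ : Perm α) (τ : Fin r → Perm α) :
    ⨆ i, SameCycle.setoid ((Fin.cons τ₀ τ : Fin (r + 1) → Perm α) i) =
      (⨆ i, SameCycle.setoid (τ i)) ⊔ SameCycle.setoid τ₀ := by
  refine eq_of_forall_ge_iff fun t => ?_
  simp only [iSup_le_iff, sup_le_iff, Fin.forall_fin_succ, Fin.cons_zero, Fin.cons_succ, and_comm]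

variable {α : Type*} [Fintype α] [DecidableEq α] {r : ℕ} {σ : Perm α} {π : Setoid α}

open scoped Classical in
theorem sum_swap {M : Type*} [AddCommMonoid M] (F : Perm α → M) :
    ∑ a : α, ∑ b ∈ univ.erase a, F (swap a b) = 2 • ∑ τ : Perm α with τ.IsSwap, F τ := by
  have hsupport (τ : Perm α) (hτ : τ ∈ ({τ | τ.IsSwap} : Finset (Perm α))) :
      ∑ _a ∈ τ.support, F τ = 2 • F τ := by
    rw [sum_const, card_support_eq_two.2 (mem_filter.1 hτ).2]
  rw [← sum_nsmul, ← sum_congr rfl hsupport, sum_sigma', sum_sigma']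
  refine sum_nbij' (fun p => ⟨swap p.1 p.2, p.1⟩) (fun p => ⟨p.2, p.1 p.2⟩) ?_ ?_ ?_ ?_ ?_
  · rintro ⟨a, b⟩ hab
    have hne := ((mem_erase.1 (mem_sigma.1 hab).2).1).symm
    exact mem_sigma.2 ⟨mem_filter.2 ⟨mem_univ _, a, b, hne, rfl⟩, by simpa using hne.symm⟩
  · rintro ⟨τ, a⟩ h
    simpa using (mem_sigma.1 h).2
  · rintro ⟨a, b⟩ -
    simp
  · rintro ⟨τ, a⟩ h
    obtain ⟨hτ, ha⟩ := mem_sigma.1 h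
    obtain ⟨x, y, hxy, rfl⟩ := (mem_filter.1 hτ).2
    obtain rfl | rfl : a = x ∨ a = y := by simpa [support_swap hxy] using ha
    · simp
    · simp [swap_comm]
  · rintro ⟨a, b⟩ -
    rfl

open scoped Classical in
/-- The factorizations of `σ` into `r` transpositions such that the orbits of the subgroup generated
by the factors are the classes of `π`. -/
noncomputable def factorizations (r : ℕ) (σ : Perm α) (π : Setoid α) : Finset (Fin r → Perm α) :=
  {τ | (∀ i, (τ i).IsSwap) ∧ (List.ofFn τ).prod = σ ∧ ⨆ i, SameCycle.setoid (τ i) = π}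

theorem mem_factorizations {τ : Fin r → Perm α} : τ ∈ factorizations r σ π ↔
    (∀ i, (τ i).IsSwap) ∧ (List.ofFn τ).prod = σ ∧ ⨆ i, SameCycle.setoid (τ i) = π := by
  simp [factorizations]

theorem mem_factorizations_zero {τ : Fin 0 → Perm α} :
    τ ∈ factorizations 0 σ π ↔ σ = 1 ∧ π = ⊥ := by
  simp [mem_factorizations, iSup_of_empty, eq_comm]

theorem cons_swap_mem_factorizations {a b : α} (hne : a ≠ b) {τ : Fin r → Perm α} :
    (Fin.cons (swap a b) τ : Fin (r + 1) → Perm α) ∈ factorizations (r + 1) σ π ↔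
      ∃ ϖ, merge ϖ a b = π ∧ τ ∈ factorizations r (swap a b * σ) ϖ := by
  have hprod : swap a b * (List.ofFn τ).prod = σ ↔ (List.ofFn τ).prod = swap a b * σ := by
    rw [← swap_inv a b, eq_inv_mul_iff_mul_eq, swap_inv]
  simp only [mem_factorizations, Fin.forall_fin_succ, Fin.cons_zero, Fin.cons_succ,
    List.ofFn_succ, List.prod_cons, iSup_setoid_cons, sup_setoid_swap, hprod]
  exact ⟨fun ⟨⟨_, hswap⟩, hprod, hπ⟩ => ⟨_, hπ, hswap, hprod, rfl⟩,
    fun ⟨_, hπ, hswap, hprod, hϖ⟩ => ⟨⟨⟨a, b, hne, rfl⟩, hswap⟩, hprod, hϖ ▸ hπ⟩⟩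

theorem exists_tail_mem_factorizations {τ : Fin (r + 1) → Perm α}
    (hτ : τ ∈ factorizations (r + 1) σ π) : ∃ a b ϖ, a ≠ b ∧ merge ϖ a b = π ∧
      Fin.tail τ ∈ factorizations r (swap a b * σ) ϖ := by
  obtain ⟨a, b, hne, hab⟩ := (mem_factorizations.1 hτ).1 0
  rw [← Fin.cons_self_tail τ, hab, cons_swap_mem_factorizations hne] at hτ
  obtain ⟨ϖ, hϖ, hτ⟩ := hτ
  exact ⟨a, b, ϖ, hne, hϖ, hτ⟩

open scoped Classical in
theorem two_mul_card_factorizations_succ (r : ℕ) (σ : Perm α) (π : Setoid α) :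
    2 * #(factorizations (r + 1) σ π) =
      ∑ a, ∑ b ∈ univ.erase a, ∑ ϖ with merge ϖ a b = π, #(factorizations r (swap a b * σ) ϖ) := by
  have hfiber (a b : α) (hne : a ≠ b) :
      ∑ ϖ with merge ϖ a b = π, #(factorizations r (swap a b * σ) ϖ) =
        #{τ ∈ factorizations (r + 1) σ π | τ 0 = swap a b} := by
    rw [← card_biUnion]
    · refine card_nbij (fun τ => Fin.cons (swap a b) τ) ?_ ?_ ?_
      · intro τ hτ
        obtain ⟨ϖ, hϖ, hτ⟩ := mem_biUnion.1 hτ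
        exact mem_filter.2 ⟨(cons_swap_mem_factorizations hne).2 ⟨ϖ, (mem_filter.1 hϖ).2, hτ⟩, rfl⟩
      · exact (Fin.cons_right_injective (α := fun _ => Perm α) _).injOn
      · intro τ hτ
        obtain ⟨hτ, h0⟩ := mem_filter.1 hτ
        rw [← Fin.cons_self_tail τ, h0, cons_swap_mem_factorizations hne] at hτ
        obtain ⟨ϖ, hϖ, hτ⟩ := hτ
        refine ⟨Fin.tail τ, mem_biUnion.2 ⟨ϖ, mem_filter.2 ⟨mem_univ ϖ, hϖ⟩, hτ⟩, ?_⟩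
        exact h0 ▸ Fin.cons_self_tail τ
    · refine fun ϖ _ ϖ' _ hne => disjoint_left.2 fun τ hτ hτ' => hne ?_
      rw [← (mem_factorizations.1 hτ).2.2, ← (mem_factorizations.1 hτ').2.2]
  rw [card_eq_sum_card_fiberwise (f := (· 0)) (t := ({τ | τ.IsSwap} : Finset (Perm α)))
    fun τ hτ => mem_filter.2 ⟨mem_univ _, (mem_factorizations.1 hτ).1 0⟩, ← smul_eq_mul, ← sum_swap]
  exact sum_congr rfl fun a _ => sum_congr rfl fun b hb => (hfiber a b (mem_erase.1 hb).1.symm).symm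

theorem setoid_le_of_mem_factorizations {τ : Fin r → Perm α} (hτ : τ ∈ factorizations r σ π) :
    SameCycle.setoid σ ≤ π := by
  induction r generalizing σ π with
  | zero =>
    obtain ⟨rfl, rfl⟩ := mem_factorizations_zero.1 hτ
    exact (setoid_eq_bot_iff.2 rfl).le
  | succ r ih =>
    obtain ⟨a, b, ϖ, -, rfl, htail⟩ := exists_tail_mem_factorizations hτ
    refine (le_merge _ a b).trans ?_
    rw [← merge_setoid_swap_mul, ← sup_setoid_swap, ← sup_setoid_swap]
    exact sup_le_sup_right (ih htail) _

theorem card_add_card_blocks_le {τ : Fin r → Perm α} (hτ : τ ∈ factorizations r σ π) :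
    Fintype.card α + #(blocks (SameCycle.setoid σ)) ≤ r + 2 * #(blocks π) := by
  induction r generalizing σ π with
  | zero =>
    obtain ⟨rfl, rfl⟩ := mem_factorizations_zero.1 hτ
    rw [setoid_eq_bot_iff.2 rfl, card_blocks_eq_card_iff.2 rfl]
    omega
  | succ r ih =>
    obtain ⟨a, b, ϖ, hne, rfl, htail⟩ := exists_tail_mem_factorizations hτ
    have hle := ih htail
    by_cases h : SameCycle σ a b
    · have hσ := (isCut_swap_mul_of_sameCycle hne h).card_blocks
      by_cases hϖ : ϖ a b
      · rw [merge_eq_self hϖ]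
        omega
      · have := IsCut.card_blocks ⟨hϖ, rfl⟩
        omega
    · have hcut := isCut_swap_mul_of_not_sameCycle h
      have hσ := hcut.card_blocks
      rw [merge_eq_self (setoid_le_of_mem_factorizations htail hcut.rel)]
      omega

theorem factorizations_eq_empty
    (h : SameCycle.setoid σ ≤ π →
      r + 2 * #(blocks π) < Fintype.card α + #(blocks (SameCycle.setoid σ))) :
    factorizations r σ π = ∅ :=
  eq_empty_of_forall_notMem fun _ hτ =>
    (card_add_card_blocks_le hτ).not_gt (h (setoid_le_of_mem_factorizations hτ))

open scoped Classical in
theorem sum_card_factorizations_of_not_sameCycle {a b : α} (h : ¬SameCycle σ a b) (hπ : π a b) :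
    ∑ ϖ with merge ϖ a b = π, #(factorizations r (swap a b * σ) ϖ) =
      #(factorizations r (swap a b * σ) π) := by
  refine sum_eq_single_of_mem π (mem_filter.2 ⟨mem_univ π, merge_eq_self hπ⟩) fun ϖ hϖ hne => ?_
  refine card_eq_zero.2 (eq_empty_of_forall_notMem fun τ hτ => hne ?_)
  have hle := setoid_le_of_mem_factorizations hτ
  rw [← (mem_filter.1 hϖ).2, merge_eq_self (hle (isCut_swap_mul_of_not_sameCycle h).rel)]

open scoped Classical in
theorem sum_card_factorizations_of_sameCycle {a b : α} (hne : a ≠ b) (h : SameCycle σ a b)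
    (hr : r + 2 * #(blocks π) ≤ Fintype.card α + #(blocks (SameCycle.setoid σ))) :
    ∑ ϖ with merge ϖ a b = π, #(factorizations r (swap a b * σ) ϖ) =
      ∑ ϖ with SameCycle.setoid (swap a b * σ) ≤ ϖ ∧ IsCut ϖ π a b,
        #(factorizations r (swap a b * σ) ϖ) := by
  refine (sum_subset (monotone_filter_right _ fun ϖ _ hϖ => hϖ.2.2) fun ϖ hϖ hnot => ?_).symm
  refine card_eq_zero.2 (factorizations_eq_empty fun hle => ?_)
  have hab : ϖ a b := by_contra fun hab =>
    hnot (mem_filter.2 ⟨mem_univ ϖ, hle, hab, (mem_filter.1 hϖ).2⟩)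
  rw [← (mem_filter.1 hϖ).2, merge_eq_self hab] at hr
  have := (isCut_swap_mul_of_sameCycle hne h).card_blocks
  omega

open scoped Classical in
theorem two_mul_card_factorizations_succ_of_le (hσ : SameCycle.setoid σ ≤ π)
    (hr : r + 2 * #(blocks π) ≤ Fintype.card α + #(blocks (SameCycle.setoid σ))) :
    2 * #(factorizations (r + 1) σ π) =
      ∑ a, (∑ b ∈ block π a \ block (SameCycle.setoid σ) a, #(factorizations r (swap a b * σ) π) +
        ∑ b ∈ (block (SameCycle.setoid σ) a).erase a,
          ∑ ϖ with SameCycle.setoid (swap a b * σ) ≤ ϖ ∧ IsCut ϖ π a b,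
            #(factorizations r (swap a b * σ) ϖ)) := by
  rw [two_mul_card_factorizations_succ]
  refine sum_congr rfl fun a _ => ?_
  have hσa := erase_subset_erase a (block_subset_block hσ a)
  have hsdiff : (block π a).erase a \ (block (SameCycle.setoid σ) a).erase a =
      block π a \ block (SameCycle.setoid σ) a := by
    have := mem_block_self (SameCycle.setoid σ) a
    grind
  have houtside (b : α) (hb : b ∉ (block π a).erase a) (hba : b ∈ univ.erase a) :
      ∑ ϖ with merge ϖ a b = π, #(factorizations r (swap a b * σ) ϖ) = 0 := by
    rw [filter_false_of_mem, sum_empty]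
    rintro ϖ - rfl
    exact hb (mem_erase.2 ⟨(mem_erase.1 hba).1, mem_block.2 (merge_rel_self ϖ a b)⟩)
  rw [← sum_subset (erase_subset_erase a (subset_univ (block π a)))
    fun b hba hb => houtside b hb hba, ← sum_sdiff hσa, hsdiff]
  congr 1
  · refine sum_congr rfl fun b hb => ?_
    rw [mem_sdiff, mem_block, mem_block] at hb
    exact sum_card_factorizations_of_not_sameCycle hb.2 hb.1
  · refine sum_congr rfl fun b hb => ?_
    rw [mem_erase, mem_block] at hb
    exact sum_card_factorizations_of_sameCycle hb.1.symm hb.2 hr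

theorem partitionWeight_bot : partitionWeight (⊥ : Setoid α) ⊥ = 1 := by
  refine prod_eq_one fun B hB => ?_
  obtain ⟨x, rfl⟩ := exists_block_eq hB
  have hx : block ⊥ x = {x} := by
    ext y
    rw [mem_block, mem_singleton, eq_comm]
    exact Iff.rfl
  rw [blocksIn_block_self, hx]
  simp [blockWeight, cycleWeight, treeCoeff]

theorem card_factorizations_zero (hσ : SameCycle.setoid σ ≤ π)
    (hr : Fintype.card α + #(blocks (SameCycle.setoid σ)) = 2 * #(blocks π)) :
    (#(factorizations 0 σ π) : ℚ) = partitionWeight (SameCycle.setoid σ) π := by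
  have hle := card_blocks_le hσ
  have hσ1 := card_blocks_le (bot_le : ⊥ ≤ SameCycle.setoid σ)
  rw [card_blocks_eq_card_iff.2 rfl] at hσ1
  obtain rfl := setoid_eq_bot_iff.1 (card_blocks_eq_card_iff.1
    (by omega : #(blocks (SameCycle.setoid σ)) = Fintype.card α))
  obtain rfl := card_blocks_eq_card_iff.1 (by omega : #(blocks π) = Fintype.card α)
  have huniv : factorizations 0 1 (⊥ : Setoid α) = univ :=
    eq_univ_of_forall fun τ => mem_factorizations_zero.2 ⟨rfl, rfl⟩
  simp [huniv, setoid_eq_bot_iff.2, partitionWeight_bot]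

theorem card_factorizations (hσ : SameCycle.setoid σ ≤ π)
    (hr : Fintype.card α + #(blocks (SameCycle.setoid σ)) = r + 2 * #(blocks π)) :
    (#(factorizations r σ π) : ℚ) = r ! * partitionWeight (SameCycle.setoid σ) π := by
  classical
  induction r generalizing σ π with
  | zero =>
    simpa using card_factorizations_zero hσ (by omega)
  | succ r ih =>
    have hjoin (a b : α) (hb : b ∈ block π a \ block (SameCycle.setoid σ) a) :
        (#(factorizations r (swap a b * σ) π) : ℚ) =
          r ! * partitionWeight (SameCycle.setoid (swap a b * σ)) π := by
      rw [mem_sdiff, mem_block, mem_block] at hb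
      have hcut := isCut_swap_mul_of_not_sameCycle hb.2
      refine ih (hcut.2 ▸ merge_le_iff.2 ⟨hσ, hb.1⟩) ?_
      have := hcut.card_blocks
      omega
    have hcut (a b : α) (hb : b ∈ (block (SameCycle.setoid σ) a).erase a) (ϖ : Setoid α)
        (hϖ : ϖ ∈ ({ϖ | SameCycle.setoid (swap a b * σ) ≤ ϖ ∧ IsCut ϖ π a b} : Finset (Setoid α))) :
        (#(factorizations r (swap a b * σ) ϖ) : ℚ) =
          r ! * partitionWeight (SameCycle.setoid (swap a b * σ)) ϖ := by
      rw [mem_erase, mem_block] at hb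
      obtain ⟨hle, hϖ⟩ := (mem_filter.1 hϖ).2
      refine ih hle ?_
      have := (isCut_swap_mul_of_sameCycle hb.1.symm hb.2).card_blocks
      have := hϖ.card_blocks
      omega
    have hrec := congrArg (Nat.cast : ℕ → ℚ)
      (two_mul_card_factorizations_succ_of_le (r := r) hσ (by omega))
    have hrQ : (Fintype.card α + #(blocks (SameCycle.setoid σ)) : ℚ) = r + 1 + 2 * #(blocks π) := by
      exact_mod_cast hr
    push_cast at hrec
    simp +contextual only [hjoin, hcut, ← mul_sum, ← mul_add] at hrec
    rw [sum_partitionWeight_swap_mul hσ, hrQ] at hrec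
    rw [Nat.factorial_succ]
    push_cast
    linear_combination hrec / 2

end Factorizations

section Transitive

open Equiv Equiv.Perm

theorem iSup_setoid_rel_iff {α ι : Type*} [Finite α] {τ : ι → Perm α} {x y : α} :
    (⨆ i, SameCycle.setoid (τ i)) x y ↔ ∃ g ∈ Subgroup.closure (Set.range τ), g x = y := by
  constructor
  · have hle : ⨆ i, SameCycle.setoid (τ i) ≤
        MulAction.orbitRel (Subgroup.closure (Set.range τ)) α := iSup_le fun i => by
      refine setoid_le_iff.2 fun x => Setoid.symm' _ ?_
      exact ⟨⟨τ i, Subgroup.subset_closure ⟨i, rfl⟩⟩, rfl⟩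
    intro hxy
    obtain ⟨⟨g, hg⟩, hgy⟩ := Setoid.symm' _ (hle hxy)
    exact ⟨g, hg, hgy⟩
  · rintro ⟨g, hg, rfl⟩
    induction hg using Subgroup.closure_induction generalizing x with
    | mem g hg =>
      obtain ⟨i, rfl⟩ := hg
      exact setoid_le_iff.1 (le_iSup (fun i => SameCycle.setoid (τ i)) i) x
    | one => exact Setoid.refl' _ x
    | mul g h _ _ hg hh => exact Setoid.trans' _ hh hg
    | inv g _ hg => simpa using Setoid.symm' _ (hg (x := g⁻¹ x))

theorem iSup_setoid_eq_top_iff {α ι : Type*} [Finite α] {τ : ι → Perm α} :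
    ⨆ i, SameCycle.setoid (τ i) = ⊤ ↔ ∀ x y, ∃ g ∈ Subgroup.closure (Set.range τ), g x = y := by
  simp only [Setoid.eq_top_iff, ← iSup_setoid_rel_iff]

end Transitive

section CycleType

open Equiv Equiv.Perm
open scoped Nat

variable {α : Type*} [Fintype α] [DecidableEq α]

theorem block_setoid_of_mem_support {σ : Perm α} {x : α} (hx : x ∈ σ.support) :
    block (SameCycle.setoid σ) x = (σ.cycleOf x).support := by
  ext y
  rw [mem_block, mem_support_cycleOf_iff]
  exact (and_iff_left hx).symm

theorem block_setoid_of_notMem_support {σ : Perm α} {x : α} (hx : x ∉ σ.support) :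
    block (SameCycle.setoid σ) x = {x} := by
  ext y
  rw [mem_block, mem_singleton, eq_comm]
  exact ⟨fun h => h.eq_of_left (notMem_support.1 hx), fun h => h ▸ SameCycle.refl σ x⟩

theorem blocks_setoid (σ : Perm α) : blocks (SameCycle.setoid σ) =
    σ.cycleFactorsFinset.image support ∪ σ.supportᶜ.image ({·}) := by
  rw [blocks_eq_image, ← union_compl σ.support, image_union]
  congr 1
  · ext A
    simp only [mem_image]
    constructor
    · rintro ⟨x, hx, rfl⟩
      exact ⟨_, cycleOf_mem_cycleFactorsFinset_iff.2 hx, (block_setoid_of_mem_support hx).symm⟩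
    · rintro ⟨c, hc, rfl⟩
      obtain ⟨x, hx⟩ := (mem_cycleFactorsFinset_iff.1 hc).1.nonempty_support
      have hxσ := mem_cycleFactorsFinset_support_le hc hx
      exact ⟨x, hxσ, by rw [block_setoid_of_mem_support hxσ, cycle_is_cycleOf hx hc]⟩
  · exact image_congr fun x hx => block_setoid_of_notMem_support (mem_compl.1 hx)

theorem map_card_blocks_setoid (σ : Perm α) :
    (blocks (SameCycle.setoid σ)).val.map card = σ.partition.parts := by
  have hdisj : Disjoint (σ.cycleFactorsFinset.image support) (σ.supportᶜ.image ({·})) := by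
    refine disjoint_left.2 fun A hA hA' => ?_
    obtain ⟨c, -, rfl⟩ := mem_image.1 hA
    obtain ⟨x, -, hx⟩ := mem_image.1 hA'
    exact (card_support_ne_one c) (by rw [← hx, card_singleton])
  have hinj : Set.InjOn support (σ.cycleFactorsFinset : Set (Perm α)) := by
    intro c hc d hd hcd
    obtain ⟨x, hx⟩ := (mem_cycleFactorsFinset_iff.1 hc).1.nonempty_support
    rw [cycle_is_cycleOf hx hc, cycle_is_cycleOf (hcd ▸ hx) hd]
  rw [blocks_setoid, ← disjUnion_eq_union _ _ hdisj, disjUnion_val, Multiset.map_add,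
    image_val_of_injOn hinj, image_val_of_injOn singleton_injective.injOn, Multiset.map_map,
    Multiset.map_map, parts_partition, cycleType_def]
  congr 1
  simp [← card_compl]

theorem card_blocks_setoid (σ : Perm α) :
    #(blocks (SameCycle.setoid σ)) = σ.partition.parts.card := by
  rw [← map_card_blocks_setoid, Multiset.card_map, card_val]

theorem cycleWeight_eq (k : ℕ) : cycleWeight k = (k : ℚ) ^ (k + 1) / k ! := by
  rw [cycleWeight, treeCoeff, pow_succ']
  ring

end CycleType

section TopPartition

open Equiv Equiv.Perm

variable {α : Type*} [Fintype α] [DecidableEq α] [Nonempty α]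

theorem blocks_top : blocks (⊤ : Setoid α) = {univ} := by
  have (y : α) : block ⊤ y = univ := eq_univ_of_forall fun z => mem_block.2 trivial
  rw [blocks_eq_image]
  ext A
  simp [this, eq_comm]

theorem partitionWeight_top (s : Setoid α) : partitionWeight s ⊤ = blockWeight card (blocks s) := by
  rw [partitionWeight, blocks_top, prod_singleton, blocksIn, filter_true_of_mem]
  exact fun A _ => subset_univ A

theorem partitionWeight_setoid_top (σ : Perm α) : partitionWeight (SameCycle.setoid σ) ⊤ =
    (Fintype.card α : ℚ) ^ (σ.partition.parts.card - 3 : ℤ) *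
      (σ.partition.parts.map cycleWeight).prod := by
  rw [partitionWeight_top, blockWeight, card_blocks_setoid, ← Nat.cast_sum, sum_card_blocks,
    ← map_card_blocks_setoid, Multiset.map_map]
  rfl

end TopPartition

end Hurwitz

open Equiv in
open scoped Nat in
theorem stmt_8_general {α : Type*} [Fintype α] [DecidableEq α] (σ : Perm α) {r : ℕ}
    (hr : r + 2 = Fintype.card α + σ.partition.parts.card) :
    (Nat.card {τ : Fin r → Perm α // (∀ i, (τ i).IsSwap) ∧ (List.ofFn τ).prod = σ ∧
        ∀ x y, ∃ g ∈ Subgroup.closure (Set.range τ), g x = y} : ℚ) =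
      r ! * (Fintype.card α : ℚ) ^ (σ.partition.parts.card - 3 : ℤ) *
        (σ.partition.parts.map fun k : ℕ => (k : ℚ) ^ (k + 1) / k !).prod := by
  have : Nonempty α := by
    refine not_isEmpty_iff.1 fun _ => ?_
    obtain rfl := Subsingleton.elim σ 1
    simp [Perm.parts_partition] at hr
  have hlen := Hurwitz.card_blocks_setoid σ
  simp only [← Hurwitz.iSup_setoid_eq_top_iff, ← Hurwitz.mem_factorizations]
  rw [Nat.card_eq_fintype_card, Fintype.card_coe, Hurwitz.card_factorizations le_top,
    Hurwitz.partitionWeight_setoid_top, mul_assoc]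
  · simp only [Hurwitz.cycleWeight_eq]
  · rw [Hurwitz.blocks_top, Finset.card_singleton, hlen, hr]

/-- The genus 0 Hurwitz number — the number of equivalence classes of generic
degree `n` meromorphic functions on the Riemann sphere with a fixed generic set of `2n - 2`
critical values — equals `n^{n-3}·(2n-2)!/n!`.  By the classical Hurwitz correspondence this
number is the count of `(2n-2)`-tuples of transpositions in `S_n` with product the identity
generating a transitive subgroup, divided by `n!`. -/
theorem stmt_8 (n : ℕ) (hn : 3 ≤ n) :
    ((Nat.card {τ : Fin (2 * n - 2) → Equiv.Perm (Fin n) //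
        (∀ i, (τ i).IsSwap) ∧ (List.ofFn τ).prod = 1 ∧
        ∀ x y : Fin n, ∃ g ∈ Subgroup.closure (Set.range τ), g x = y} : ℚ)) /
        (n.factorial : ℚ)
      = (n : ℚ) ^ (n - 3) * ((2 * n - 2).factorial : ℚ) / (n.factorial : ℚ) := by
  have : NeZero n := ⟨by omega⟩
  have hparts : (1 : Equiv.Perm (Fin n)).partition.parts = Multiset.replicate n 1 := by
    simp [Equiv.Perm.parts_partition]
  have hpow : (n : ℚ) ^ (n - 3 : ℤ) = (n : ℚ) ^ (n - 3) := by
    rw [← zpow_natCast, Nat.cast_sub hn, Nat.cast_ofNat]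
  rw [stmt_8_general 1 (by rw [hparts, Fintype.card_fin, Multiset.card_replicate]; omega), hparts,
    Multiset.card_replicate, Fintype.card_fin, hpow]
  simp [mul_comm]
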